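/- arXiv:2601.17347 — 3 statements merged into one kernel-verified Lean document; each statement's English description precedes it below -/
import Mathlib

section
/- Let 0<α<1 and let f be a Schwartz function on ℝ. Then for every ξ∈ℝ, the spectral fractional derivative admits the Marchaud-type representation D^α f(ξ) = C_α ∫₀^∞ [f(ξ) − f(ξ−y)] / y^{1+α} dy, where C_α = α/Γ(1−α) = −1/Γ(−α); that is, the function ξ ↦ C_α ∫₀^∞ [f(ξ)−f(ξ−y)] y^{−1−α} dy has Fourier transform (ik)^α f̂(k). -/
open MeasureTheory

noncomputable section

/-- Fourier transform with convention `f̂(k) = ∫ f(ξ) e^{-ikξ} dξ`. -/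
def FT (f : ℝ → ℂ) (k : ℝ) : ℂ :=
  ∫ ξ : ℝ, f ξ * Complex.exp (-(Complex.I * (k : ℂ) * (ξ : ℂ)))

/-- Spectral fractional derivative `D^α f`, defined via Fourier inversion so that
`F[D^α f](k) = (ik)^α f̂(k)` with the principal branch. -/
def fracDeriv (α : ℝ) (f : ℝ → ℂ) (ξ : ℝ) : ℂ :=
  ((2 * Real.pi : ℝ) : ℂ)⁻¹ *
    ∫ k : ℝ, (Complex.I * (k : ℂ)) ^ (α : ℂ) * FT f k * Complex.exp (Complex.I * (k : ℂ) * (ξ : ℂ))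

/-- The Marchaud-type operator `C_α ∫₀^∞ (f(ξ) − f(ξ−y)) y^{−1−α} dy` with
`C_α = α/Γ(1−α)`. -/
def marchaud (α : ℝ) (f : ℝ → ℂ) (ξ : ℝ) : ℂ :=
  ((α / Real.Gamma (1 - α) : ℝ) : ℂ) *
    ∫ y in Set.Ioi (0 : ℝ), (f ξ - f (ξ - y)) / ((y ^ (1 + α) : ℝ) : ℂ)

/-!
For `0 ≤ Re r` the exponential `ξ ↦ e^{rξ}` is an eigenfunction of the Marchaud operator, with
eigenvalue `σ(r) = C_α ∫₀^∞ (1 - e^{-ry}) y^{-1-α} dy`, so the whole matter is that `σ(r) = r^α`.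
The substitution `y ↦ cy` gives `σ(c) = c^α σ(1)` for `c > 0`, and `σ` is holomorphic on `0 < Re r`,
so `σ(r) = r^α σ(1)` there by the identity theorem. Comparing derivatives at `1` gives
`α σ(1) = C_α ∫₀^∞ e^{-y} y^{-α} dy = C_α Γ(1-α) = α`. Both sides being continuous on `0 ≤ Re r`,
the formula extends to the imaginary axis.

The pointwise representation is then Fourier inversion and Fubini in `(y, k)`, justified by
`∫₀^∞ min(1, |k|y) y^{-1-α} dy = |k|^α ∫₀^∞ min(1, y) y^{-1-α} dy`. The formula on the Fourier side
is Fubini in `(ξ, y)`, justified by `∫ |f(ξ) - f(ξ-y)| dξ = O(min(1, y))`.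
-/

open Set Filter Topology
open scoped FourierTransform

variable {α : ℝ}

lemma div_Gamma_one_sub (hα : α ≠ 0) : α / Real.Gamma (1 - α) = -1 / Real.Gamma (-α) := by
  rw [sub_eq_neg_add, Real.Gamma_add_one (neg_ne_zero.2 hα), div_mul_eq_div_div, div_neg,
    div_self hα]

/-! ### The weight `y ^ (-1 - α)` on the half-line -/

lemma integrableOn_min_one_div_rpow (hα0 : 0 < α) (hα1 : α < 1) :
    IntegrableOn (fun y : ℝ => min 1 y / y ^ (1 + α)) (Ioi 0) := by
  rw [← Ioc_union_Ioi_eq_Ioi (zero_le_one' ℝ)]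
  refine IntegrableOn.union ?_ ?_
  · have h : IntegrableOn (fun y : ℝ => y ^ (-α)) (Ioc 0 1) := by
      rw [← intervalIntegrable_iff_integrableOn_Ioc_of_le zero_le_one]
      exact intervalIntegral.intervalIntegrable_rpow' (by linarith)
    refine h.congr_fun (fun y hy => ?_) measurableSet_Ioc
    have hy0 : 0 < y := hy.1
    simp only [min_eq_right hy.2]
    rw [Real.rpow_add hy0, Real.rpow_one, Real.rpow_neg hy0.le]
    field_simp
  · have h := integrableOn_Ioi_rpow_of_lt (a := -(1 + α)) (by linarith) one_pos
    refine h.congr_fun (fun y (hy : 1 < y) => ?_) measurableSet_Ioi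
    simp only [min_eq_left hy.le]
    rw [Real.rpow_neg (by linarith), one_div]

lemma integrableOn_min_one_mul_div_rpow (hα0 : 0 < α) (hα1 : α < 1) {c : ℝ} (hc : 0 ≤ c) :
    IntegrableOn (fun y : ℝ => min 1 (c * y) / y ^ (1 + α)) (Ioi 0) := by
  refine ((integrableOn_min_one_div_rpow hα0 hα1).const_mul (max 1 c)).mono'
    (Measurable.aestronglyMeasurable (by fun_prop)) ?_
  filter_upwards [ae_restrict_mem measurableSet_Ioi] with y (hy : 0 < y)
  have hmin : min 1 (c * y) ≤ max 1 c * min 1 y := by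
    rw [mul_min_of_nonneg _ _ (by positivity), mul_one]
    exact min_le_min (le_max_left 1 c) (by gcongr; exact le_max_right 1 c)
  rw [Real.norm_of_nonneg (by positivity), ← mul_div_assoc]
  gcongr

lemma integral_inv_rpow_smul_comp_mul_left {E : Type*} [NormedAddCommGroup E] [NormedSpace ℝ E]
    (g : ℝ → E) (α : ℝ) {c : ℝ} (hc : 0 < c) :
    ∫ y in Ioi (0 : ℝ), (y ^ (1 + α))⁻¹ • g (c * y) =
      c ^ α • ∫ y in Ioi (0 : ℝ), (y ^ (1 + α))⁻¹ • g y := by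
  have h := integral_comp_mul_left_Ioi (fun y : ℝ => (y ^ (1 + α))⁻¹ • g y) 0 hc
  rw [mul_zero] at h
  calc ∫ y in Ioi (0 : ℝ), (y ^ (1 + α))⁻¹ • g (c * y)
      = ∫ y in Ioi (0 : ℝ), c ^ (1 + α) • ((c * y) ^ (1 + α))⁻¹ • g (c * y) := by
        refine setIntegral_congr_fun measurableSet_Ioi fun y (hy : 0 < y) => ?_
        simp only [Real.mul_rpow hc.le hy.le, smul_smul, mul_inv]
        rw [mul_inv_cancel_left₀ (by positivity)]
    _ = c ^ α • ∫ y in Ioi (0 : ℝ), (y ^ (1 + α))⁻¹ • g y := by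
        rw [integral_smul, h, smul_smul, add_comm, Real.rpow_add_one hc.ne',
          mul_inv_cancel_right₀ hc.ne', add_comm]

lemma integral_min_one_mul_div_rpow (hα : α ≠ 0) {c : ℝ} (hc : 0 ≤ c) :
    ∫ y in Ioi (0 : ℝ), min 1 (c * y) / y ^ (1 + α) =
      c ^ α * ∫ y in Ioi (0 : ℝ), min 1 y / y ^ (1 + α) := by
  rcases hc.eq_or_lt with rfl | hc
  · simp [Real.zero_rpow hα]
  · simpa only [smul_eq_mul, div_eq_inv_mul] using
      integral_inv_rpow_smul_comp_mul_left (fun y => min 1 y) α hc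

lemma integrable_prod_mul_min_one_mul_div_rpow {E : Type*} [NormedAddCommGroup E]
    (hα0 : 0 < α) (hα1 : α < 1) {g : ℝ → E} (hg : AEStronglyMeasurable g)
    (hgα : Integrable fun k : ℝ => |k| ^ α * ‖g k‖) :
    Integrable (fun p : ℝ × ℝ => ‖g p.2‖ * (min 1 (|p.2| * p.1) / p.1 ^ (1 + α)))
      ((volume.restrict (Ioi 0)).prod volume) := by
  refine (integrable_prod_iff' ?_).2 ⟨Eventually.of_forall fun k => ?_, ?_⟩
  · exact hg.norm.comp_snd.mul (Measurable.aestronglyMeasurable (by fun_prop))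
  · exact (integrableOn_min_one_mul_div_rpow hα0 hα1 (abs_nonneg k)).const_mul ‖g k‖
  · refine (hgα.mul_const (∫ y in Ioi (0 : ℝ), min 1 y / y ^ (1 + α))).congr
      (Eventually.of_forall fun k => ?_)
    have hnorm : ∀ y ∈ Ioi (0 : ℝ), ‖‖g k‖ * (min 1 (|k| * y) / y ^ (1 + α))‖ =
        ‖g k‖ * (min 1 (|k| * y) / y ^ (1 + α)) := fun y (hy : 0 < y) =>
      Real.norm_of_nonneg (by positivity)
    simp only
    rw [setIntegral_congr_fun measurableSet_Ioi hnorm, integral_const_mul,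
      integral_min_one_mul_div_rpow hα0.ne' (abs_nonneg k)]
    ring

/-! ### The symbol of the Marchaud operator -/

lemma norm_one_sub_exp_neg_le {z : ℂ} (hz : 0 ≤ z.re) :
    ‖1 - Complex.exp (-z)‖ ≤ 2 * min 1 ‖z‖ := by
  rcases le_total 1 ‖z‖ with h | h
  · have hexp : ‖Complex.exp (-z)‖ ≤ 1 := by
      rw [Complex.norm_exp, Real.exp_le_one_iff, Complex.neg_re]
      linarith
    calc ‖1 - Complex.exp (-z)‖ ≤ ‖(1 : ℂ)‖ + ‖Complex.exp (-z)‖ := norm_sub_le _ _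
      _ ≤ 2 * min 1 ‖z‖ := by rw [norm_one, min_eq_left h]; linarith
  · rw [norm_sub_rev, min_eq_right h, ← norm_neg z]
    exact Complex.norm_exp_sub_one_le (by rwa [norm_neg])

lemma norm_div_ofReal_rpow (z : ℂ) {y : ℝ} (hy : 0 ≤ y) (s : ℝ) :
    ‖z / ((y ^ s : ℝ) : ℂ)‖ = ‖z‖ / y ^ s := by
  rw [norm_div, Complex.norm_real, Real.norm_of_nonneg (by positivity)]

lemma norm_one_sub_exp_neg_mul_div_rpow_le (s : ℝ) {r : ℂ} (hr : 0 ≤ r.re) {y : ℝ} (hy : 0 ≤ y) :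
    ‖(1 - Complex.exp (-(r * y))) / ((y ^ s : ℝ) : ℂ)‖ ≤ 2 * (min 1 (‖r‖ * y) / y ^ s) := by
  have hre : 0 ≤ (r * y).re := by
    rw [Complex.re_mul_ofReal]
    positivity
  have h := norm_one_sub_exp_neg_le hre
  rw [norm_mul, Complex.norm_real, Real.norm_of_nonneg hy] at h
  rw [norm_div_ofReal_rpow _ hy, ← mul_div_assoc]
  gcongr

lemma integrableOn_one_sub_exp_neg_mul_div_rpow (hα0 : 0 < α) (hα1 : α < 1) {r : ℂ}
    (hr : 0 ≤ r.re) :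
    IntegrableOn (fun y : ℝ => (1 - Complex.exp (-(r * y))) / ((y ^ (1 + α) : ℝ) : ℂ))
      (Ioi 0) := by
  refine ((integrableOn_min_one_mul_div_rpow hα0 hα1 (norm_nonneg r)).const_mul 2).mono'
    (Measurable.aestronglyMeasurable (by fun_prop)) ?_
  filter_upwards [ae_restrict_mem measurableSet_Ioi] with y (hy : 0 < y)
  exact norm_one_sub_exp_neg_mul_div_rpow_le _ hr hy.le

/-- The symbol of the Marchaud operator: the eigenvalue of `marchaud α` on `ξ ↦ e^{rξ}`, written
at `ξ = 0`. It is meaningful for `0 ≤ Re r`, where the integral converges. -/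
def marchaudSymbol (α : ℝ) (r : ℂ) : ℂ :=
  ((α / Real.Gamma (1 - α) : ℝ) : ℂ) *
    ∫ y in Ioi (0 : ℝ), (1 - Complex.exp (-(r * y))) / ((y ^ (1 + α) : ℝ) : ℂ)

lemma marchaudSymbol_ofReal_mul (α : ℝ) {c : ℝ} (hc : 0 < c) (r : ℂ) :
    marchaudSymbol α (c * r) = ((c ^ α : ℝ) : ℂ) * marchaudSymbol α r := by
  have h := integral_inv_rpow_smul_comp_mul_left
    (fun y : ℝ => 1 - Complex.exp (-(r * y))) α hc
  simp only [Complex.real_smul, Complex.ofReal_inv, ← div_eq_inv_mul] at h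
  simp only [marchaudSymbol, mul_left_comm _ ((α / Real.Gamma (1 - α) : ℝ) : ℂ), ← h]
  congr! 7
  push_cast
  ring

lemma continuousOn_marchaudSymbol (hα0 : 0 < α) (hα1 : α < 1) :
    ContinuousOn (marchaudSymbol α) {r | 0 ≤ r.re} := by
  refine continuousOn_const.mul fun r _ => ?_
  refine continuousWithinAt_of_dominated
    (bound := fun y => 2 * (min 1 ((‖r‖ + 1) * y) / y ^ (1 + α)))
    (Eventually.of_forall fun _ => Measurable.aestronglyMeasurable (by fun_prop)) ?_
    ((integrableOn_min_one_mul_div_rpow hα0 hα1 (by positivity)).const_mul 2)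
    (Eventually.of_forall fun y => Continuous.continuousWithinAt (by fun_prop))
  have hnear : ∀ᶠ z in 𝓝[{r | 0 ≤ r.re}] r, ‖z‖ < ‖r‖ + 1 :=
    (continuous_norm.tendsto r).mono_left nhdsWithin_le_nhds |>.eventually_lt_const (lt_add_one _)
  filter_upwards [hnear, self_mem_nhdsWithin] with z hz hzre
  filter_upwards [ae_restrict_mem measurableSet_Ioi] with y (hy : 0 < y)
  refine (norm_one_sub_exp_neg_mul_div_rpow_le _ hzre hy.le).trans ?_
  gcongr

lemma hasDerivAt_marchaudSymbol (hα0 : 0 < α) (hα1 : α < 1) {r : ℂ} (hr : 0 < r.re) :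
    HasDerivAt (marchaudSymbol α) (((α / Real.Gamma (1 - α) : ℝ) : ℂ) *
      ∫ y in Ioi (0 : ℝ), ((y ^ (-α) : ℝ) : ℂ) * Complex.exp (-(r * y))) r := by
  have hnhds : {z : ℂ | r.re / 2 < z.re} ∈ 𝓝 r :=
    (isOpen_lt continuous_const Complex.continuous_re).mem_nhds (half_lt_self hr)
  have hbound : IntegrableOn (fun y : ℝ => y ^ (-α) * Real.exp (-(r.re / 2) * y)) (Ioi 0) := by
    simpa only [Real.rpow_one] using integrableOn_rpow_mul_exp_neg_mul_rpow
      (p := 1) (s := -α) (by linarith) one_pos (half_pos hr)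
  refine (hasDerivAt_integral_of_dominated_loc_of_deriv_le (𝕜 := ℂ)
    (F := fun z (y : ℝ) => (1 - Complex.exp (-(z * y))) / ((y ^ (1 + α) : ℝ) : ℂ))
    (F' := fun z (y : ℝ) => ((y ^ (-α) : ℝ) : ℂ) * Complex.exp (-(z * y)))
    hnhds (Eventually.of_forall fun z => Measurable.aestronglyMeasurable (by fun_prop))
    (integrableOn_one_sub_exp_neg_mul_div_rpow hα0 hα1 hr.le)
    (Measurable.aestronglyMeasurable (by fun_prop)) ?_ hbound ?_).2.const_mul _
  · filter_upwards [ae_restrict_mem measurableSet_Ioi] with y (hy : 0 < y) z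
      (hz : r.re / 2 < z.re)
    rw [norm_mul, Complex.norm_real, Real.norm_of_nonneg (by positivity), Complex.norm_exp,
      Complex.neg_re, Complex.re_mul_ofReal, ← neg_mul]
    gcongr
  · filter_upwards [ae_restrict_mem measurableSet_Ioi] with y (hy : 0 < y) z _
    have hlin : HasDerivAt (fun z : ℂ => -(z * y)) (-(1 * y)) z :=
      ((hasDerivAt_id z).mul_const (y : ℂ)).neg
    refine ((hlin.cexp.const_sub 1).div_const ((y ^ (1 + α) : ℝ) : ℂ)).congr_deriv ?_
    have hy' : (y : ℂ) ≠ 0 := by exact_mod_cast hy.ne'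
    have hyα : ((y ^ α : ℝ) : ℂ) ≠ 0 := by exact_mod_cast (Real.rpow_pos_of_pos hy α).ne'
    rw [Real.rpow_add hy, Real.rpow_one, Real.rpow_neg hy.le]
    push_cast
    field_simp

lemma marchaudSymbol_eqOn_cpow_mul (hα0 : 0 < α) (hα1 : α < 1) :
    EqOn (marchaudSymbol α) (fun r => r ^ (α : ℂ) * marchaudSymbol α 1) {r | 0 < r.re} := by
  have hopen : IsOpen {r : ℂ | 0 < r.re} := isOpen_lt continuous_const Complex.continuous_re
  have hsymbol : DifferentiableOn ℂ (marchaudSymbol α) {r | 0 < r.re} := fun r hr =>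
    (hasDerivAt_marchaudSymbol hα0 hα1 hr).differentiableAt.differentiableWithinAt
  have hcpow : DifferentiableOn ℂ (fun r : ℂ => r ^ (α : ℂ) * marchaudSymbol α 1) {r | 0 < r.re} :=
    fun r hr => ((differentiableAt_id.cpow_const (Or.inl hr)).mul_const _).differentiableWithinAt
  have hofReal : Tendsto ((↑) : ℝ → ℂ) (𝓝[≠] 1) (𝓝[≠] 1) :=
    tendsto_nhdsWithin_iff.2
      ⟨(Complex.continuous_ofReal.tendsto' 1 1 Complex.ofReal_one).mono_left nhdsWithin_le_nhds,
        by filter_upwards [self_mem_nhdsWithin] with c hc; simpa using hc⟩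
  refine (hsymbol.analyticOnNhd hopen).eqOn_of_preconnected_of_frequently_eq
    (hcpow.analyticOnNhd hopen) (convex_halfSpace_re_gt 0).isPreconnected (z₀ := 1) (by simp)
    (hofReal.frequently (Eventually.frequently ?_))
  filter_upwards [nhdsWithin_le_nhds (lt_mem_nhds (zero_lt_one' ℝ))] with c hc
  simpa [Complex.ofReal_cpow hc.le] using marchaudSymbol_ofReal_mul α hc 1

lemma marchaudSymbol_one (hα0 : 0 < α) (hα1 : α < 1) : marchaudSymbol α 1 = 1 := by
  have hα : (α : ℂ) ≠ 0 := by exact_mod_cast hα0.ne'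
  have hΓ : (∫ y in Ioi (0 : ℝ), ((y ^ (-α) : ℝ) : ℂ) * Complex.exp (-(1 * y))) =
      ((Real.Gamma (1 - α) : ℝ) : ℂ) := by
    rw [Real.Gamma_eq_integral (by linarith), ← integral_complex_ofReal, sub_sub_cancel_left]
    congr 1 with y
    push_cast
    rw [one_mul, mul_comm]
  have hderiv : HasDerivAt (marchaudSymbol α) α 1 := by
    refine (hasDerivAt_marchaudSymbol hα0 hα1 (r := 1) (by simp)).congr_deriv ?_
    rw [hΓ, ← Complex.ofReal_mul,
      div_mul_cancel₀ _ (Real.Gamma_pos_of_pos (by linarith : 0 < 1 - α)).ne']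
  have hderiv' : HasDerivAt (marchaudSymbol α) (α * marchaudSymbol α 1) 1 := by
    have h := ((hasDerivAt_id (1 : ℂ)).cpow_const (c := α) (by simp)).mul_const
      (marchaudSymbol α 1)
    refine (h.congr_deriv (by simp)).congr_of_eventuallyEq ?_
    exact (marchaudSymbol_eqOn_cpow_mul hα0 hα1).eventuallyEq_of_mem
      ((isOpen_lt continuous_const Complex.continuous_re).mem_nhds (by simp))
  exact mul_left_cancel₀ hα ((hderiv'.unique hderiv).trans (mul_one _).symm)

theorem marchaudSymbol_eq_cpow (hα0 : 0 < α) (hα1 : α < 1) {r : ℂ} (hr : 0 ≤ r.re) :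
    marchaudSymbol α r = r ^ (α : ℂ) := by
  have hpos : EqOn (marchaudSymbol α) (fun r => r ^ (α : ℂ)) {r | 0 < r.re} := fun r hr => by
    simpa only [marchaudSymbol_one hα0 hα1, mul_one] using marchaudSymbol_eqOn_cpow_mul hα0 hα1 hr
  have hcpow : ContinuousOn (fun r : ℂ => r ^ (α : ℂ)) {r | 0 ≤ r.re} := fun r hr =>
    (Complex.continuousAt_cpow_const_of_re_pos (Or.inl hr) (by simpa)).continuousWithinAt
  exact hpos.of_subset_closure (continuousOn_marchaudSymbol hα0 hα1) hcpow
    (fun z (hz : 0 < z.re) => hz.le) (Complex.closure_setOfPred_lt_re 0).ge hr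

/-! ### The Fourier transform -/

section FourierTransform

variable {f : ℝ → ℂ}

lemma FT_eq_fourier (f : ℝ → ℂ) (k : ℝ) : FT f k = 𝓕 f (k / (2 * Real.pi)) := by
  rw [Real.fourier_real_eq_integral_exp_smul, FT]
  congr 1 with ξ
  rw [smul_eq_mul, mul_comm]
  congr 2
  have : (Real.pi : ℂ) ≠ 0 := by exact_mod_cast Real.pi_ne_zero
  push_cast
  field_simp

lemma continuous_FT (hf : Integrable f) : Continuous (FT f) := by
  have hF : Continuous (𝓕 f) := VectorFourier.fourierIntegral_continuous
    Real.continuous_fourierChar continuous_inner hf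
  rw [funext (FT_eq_fourier f)]
  fun_prop

lemma integrable_FT_of_integrable_rpow_mul (hα : 0 ≤ α) (hf : Integrable f)
    (hfα : Integrable fun k : ℝ => |k| ^ α * ‖FT f k‖) : Integrable (FT f) := by
  have hc := continuous_FT hf
  rw [← integrableOn_univ, ← union_compl_self (Icc (-1) (1 : ℝ))]
  refine hc.integrableOn_Icc.union (hfα.integrableOn.mono' hc.aestronglyMeasurable ?_)
  filter_upwards [ae_restrict_mem measurableSet_Icc.compl] with k hk
  have hk1 : 1 ≤ |k| := by
    rw [mem_compl_iff, mem_Icc, ← abs_le] at hk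
    exact (not_le.1 hk).le
  exact le_mul_of_one_le_left (norm_nonneg _) (Real.one_le_rpow hk1 hα)

lemma integrable_FT_mul_exp (hF : Integrable (FT f)) (ξ : ℝ) :
    Integrable fun k : ℝ => FT f k * Complex.exp (Complex.I * k * ξ) :=
  hF.mul_bdd (c := 1) (Continuous.aestronglyMeasurable (by fun_prop))
    (Eventually.of_forall fun k => by simp [Complex.norm_exp])

lemma FT_inversion (hc : Continuous f) (hf : Integrable f) (hF : Integrable (FT f)) (ξ : ℝ) :
    f ξ = ((2 * Real.pi : ℝ) : ℂ)⁻¹ * ∫ k : ℝ, FT f k * Complex.exp (Complex.I * k * ξ) := by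
  have h2π : 0 < 2 * Real.pi := by positivity
  have hFT : ∀ v, FT f (v * (2 * Real.pi)) = 𝓕 f v := fun v => by
    rw [FT_eq_fourier, mul_div_cancel_right₀ _ h2π.ne']
  have h𝓕 : Integrable (𝓕 f) :=
    (hF.comp_mul_right' h2π.ne').congr (Eventually.of_forall hFT)
  have hsubst := Measure.integral_comp_mul_right
    (fun k : ℝ => FT f k * Complex.exp (Complex.I * k * ξ)) (2 * Real.pi)
  rw [abs_of_pos (inv_pos.2 h2π), Complex.real_smul, Complex.ofReal_inv] at hsubst
  rw [← hsubst, ← congr_fun (hc.fourierInv_fourier_eq hf h𝓕) ξ, Real.fourierInv_eq']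
  congr 1 with v
  rw [hFT, smul_eq_mul, mul_comm]
  congr 2
  simp only [RCLike.inner_apply, conj_trivial]
  push_cast
  ring

lemma sub_comp_sub_eq_integral_FT (hc : Continuous f) (hf : Integrable f)
    (hF : Integrable (FT f)) (ξ y : ℝ) :
    f ξ - f (ξ - y) = ((2 * Real.pi : ℝ) : ℂ)⁻¹ *
      ∫ k : ℝ, FT f k * Complex.exp (Complex.I * k * ξ) *
        (1 - Complex.exp (-(Complex.I * k * y))) := by
  rw [FT_inversion hc hf hF ξ, FT_inversion hc hf hF (ξ - y), ← mul_sub,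
    ← integral_sub (integrable_FT_mul_exp hF ξ) (integrable_FT_mul_exp hF (ξ - y))]
  congr 2 with k
  rw [mul_sub, mul_one, mul_assoc _ _ (Complex.exp _), ← Complex.exp_add]
  congr 3
  push_cast
  ring

lemma FT_sub_comp_sub (hf : Integrable f) (k y : ℝ) :
    FT (fun ξ => f ξ - f (ξ - y)) k = FT f k * (1 - Complex.exp (-(Complex.I * k * y))) := by
  have hint : Integrable fun ξ : ℝ => f ξ * Complex.exp (-(Complex.I * k * ξ)) :=
    hf.mul_bdd (c := 1) (Continuous.aestronglyMeasurable (by fun_prop))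
      (Eventually.of_forall fun ξ => by simp [Complex.norm_exp])
  have hshift : ∀ ξ : ℝ, f (ξ - y) * Complex.exp (-(Complex.I * k * ξ)) =
      Complex.exp (-(Complex.I * k * y)) *
        (f (ξ - y) * Complex.exp (-(Complex.I * k * (ξ - y : ℝ)))) := fun ξ => by
    rw [mul_left_comm, ← Complex.exp_add]
    congr 2
    push_cast
    ring
  simp only [FT, sub_mul, hshift]
  rw [integral_sub hint ((hint.comp_sub_right y).const_mul _), integral_const_mul,
    integral_sub_right_eq_self (fun ξ : ℝ => f ξ * Complex.exp (-(Complex.I * k * ξ)))]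
  ring

end FourierTransform

/-! ### The pointwise representation -/

lemma integrable_FT_mul_exp_mul_kernel (hα0 : 0 < α) (hα1 : α < 1) {f : ℝ → ℂ}
    (hf : Integrable f) (hfα : Integrable fun k : ℝ => |k| ^ α * ‖FT f k‖) (ξ : ℝ) :
    Integrable (Function.uncurry fun y k : ℝ => FT f k * Complex.exp (Complex.I * k * ξ) *
        ((1 - Complex.exp (-(Complex.I * k * y))) / ((y ^ (1 + α) : ℝ) : ℂ)))
      ((volume.restrict (Ioi 0)).prod volume) := by
  have hFT := (continuous_FT hf).measurable
  refine ((integrable_prod_mul_min_one_mul_div_rpow hα0 hα1 hFT.aestronglyMeasurable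
    hfα).const_mul 2).mono' (Measurable.aestronglyMeasurable ?_) ?_
  · unfold Function.uncurry
    fun_prop
  · filter_upwards [Measure.quasiMeasurePreserving_fst.ae (ae_restrict_mem measurableSet_Ioi)]
      with ⟨y, k⟩ (hy : 0 < y)
    have hkernel :=
      norm_one_sub_exp_neg_mul_div_rpow_le (1 + α) (r := Complex.I * k) (by simp) hy.le
    have hI : ‖Complex.I * (k : ℂ)‖ = |k| := by simp
    have hexp : ‖Complex.exp (Complex.I * k * ξ)‖ = 1 := by simp [Complex.norm_exp]
    rw [hI] at hkernel
    simp only [Function.uncurry]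
    rw [norm_mul, norm_mul, hexp, mul_one, mul_left_comm]
    gcongr

theorem fracDeriv_eq_marchaud (hα0 : 0 < α) (hα1 : α < 1) {f : ℝ → ℂ} (hc : Continuous f)
    (hf : Integrable f) (hfα : Integrable fun k : ℝ => |k| ^ α * ‖FT f k‖) (ξ : ℝ) :
    fracDeriv α f ξ = marchaud α f ξ := by
  have hF := integrable_FT_of_integrable_rpow_mul hα0.le hf hfα
  have hinv : (∫ y in Ioi (0 : ℝ), (f ξ - f (ξ - y)) / ((y ^ (1 + α) : ℝ) : ℂ)) =
      ((2 * Real.pi : ℝ) : ℂ)⁻¹ * ∫ y in Ioi (0 : ℝ), ∫ k : ℝ,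
        FT f k * Complex.exp (Complex.I * k * ξ) *
        ((1 - Complex.exp (-(Complex.I * k * y))) / ((y ^ (1 + α) : ℝ) : ℂ)) := by
    rw [← integral_const_mul]
    congr 1 with y
    rw [sub_comp_sub_eq_integral_FT hc hf hF, mul_div_assoc, ← integral_div]
    simp only [mul_div_assoc]
  have hsymbol : ∀ k : ℝ, (Complex.I * k) ^ (α : ℂ) = marchaudSymbol α (Complex.I * k) := fun k =>
    (marchaudSymbol_eq_cpow hα0 hα1 (by simp)).symm
  rw [marchaud, fracDeriv, hinv,
    integral_integral_swap (integrable_FT_mul_exp_mul_kernel hα0 hα1 hf hfα ξ), mul_left_comm]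
  congr 1
  rw [← integral_const_mul]
  congr 1 with k
  rw [integral_const_mul, hsymbol, marchaudSymbol]
  ring

/-! ### The Fourier transform of the Marchaud expression -/

/-- Finiteness of `∫ ∫₀^∞ |f(ξ) - f(ξ-y)| y^{-1-α} dy dξ`, the Gagliardo seminorm of the fractional
Sobolev space `W^{α,1}(ℝ)` up to a factor `2`. Under this condition `marchaud α f` is defined almost
everywhere and integrable. -/
def MarchaudIntegrable (α : ℝ) (f : ℝ → ℂ) : Prop :=
  Integrable (Function.uncurry fun ξ y : ℝ => (f ξ - f (ξ - y)) / ((y ^ (1 + α) : ℝ) : ℂ))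
    (volume.prod (volume.restrict (Ioi 0)))

theorem FT_marchaud (hα0 : 0 < α) (hα1 : α < 1) {f : ℝ → ℂ} (hf : Integrable f)
    (hfW : MarchaudIntegrable α f) (k : ℝ) :
    FT (marchaud α f) k = (Complex.I * (k : ℂ)) ^ (α : ℂ) * FT f k := by
  have hint : Integrable (Function.uncurry fun ξ y : ℝ =>
      (f ξ - f (ξ - y)) / ((y ^ (1 + α) : ℝ) : ℂ) * Complex.exp (-(Complex.I * k * ξ)))
      (volume.prod (volume.restrict (Ioi 0))) :=
    hfW.mul_bdd (c := 1) (Measurable.aestronglyMeasurable (by fun_prop))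
      (Eventually.of_forall fun p => by simp [Complex.norm_exp])
  have hdiff : ∀ y : ℝ, (∫ ξ : ℝ, (f ξ - f (ξ - y)) / ((y ^ (1 + α) : ℝ) : ℂ) *
        Complex.exp (-(Complex.I * k * ξ))) =
      FT f k * ((1 - Complex.exp (-(Complex.I * k * y))) / ((y ^ (1 + α) : ℝ) : ℂ)) := fun y => by
    rw [← mul_div_assoc, ← FT_sub_comp_sub hf, FT, ← integral_div]
    simp only [div_mul_eq_mul_div]
  calc FT (marchaud α f) k
      = ((α / Real.Gamma (1 - α) : ℝ) : ℂ) * ∫ ξ : ℝ, ∫ y in Ioi (0 : ℝ),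
          (f ξ - f (ξ - y)) / ((y ^ (1 + α) : ℝ) : ℂ) * Complex.exp (-(Complex.I * k * ξ)) := by
        rw [FT, ← integral_const_mul]
        simp only [marchaud, integral_mul_const, mul_assoc]
    _ = marchaudSymbol α (Complex.I * k) * FT f k := by
        rw [integral_integral_swap hint]
        simp only [hdiff]
        rw [integral_const_mul, marchaudSymbol]
        ring
    _ = (Complex.I * (k : ℂ)) ^ (α : ℂ) * FT f k := by
        rw [marchaudSymbol_eq_cpow hα0 hα1 (by simp)]

/-! ### Sufficient conditions for integrability -/

section L1Modulus

variable {E : Type*} [NormedAddCommGroup E] {f : ℝ → E}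

lemma integral_norm_sub_comp_sub_le_two_mul (hf : Integrable f) (y : ℝ) :
    ∫ ξ, ‖f ξ - f (ξ - y)‖ ≤ 2 * ∫ ξ, ‖f ξ‖ :=
  calc ∫ ξ, ‖f ξ - f (ξ - y)‖ ≤ ∫ ξ, (‖f ξ‖ + ‖f (ξ - y)‖) :=
        integral_mono (hf.sub (hf.comp_sub_right y)).norm
          (hf.norm.add (hf.comp_sub_right y).norm) fun ξ => norm_sub_le _ _
    _ = 2 * ∫ ξ, ‖f ξ‖ := by
        rw [integral_add hf.norm (hf.comp_sub_right y).norm,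
          integral_sub_right_eq_self (fun ξ => ‖f ξ‖), two_mul]

variable [NormedSpace ℝ E] [CompleteSpace E]

lemma norm_sub_comp_sub_le_integral_norm_deriv (hd : Differentiable ℝ f)
    (hf' : Integrable (deriv f)) (ξ : ℝ) {y : ℝ} (hy : 0 ≤ y) :
    ‖f ξ - f (ξ - y)‖ ≤ ∫ t in Ioc 0 y, ‖deriv f (ξ - t)‖ := by
  have h : ∫ t in (0 : ℝ)..y, deriv f (ξ - t) = f ξ - f (ξ - y) := by
    rw [intervalIntegral.integral_comp_sub_left (deriv f), sub_zero]
    exact intervalIntegral.integral_deriv_eq_sub (fun t _ => hd t) hf'.intervalIntegrable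
  rw [← h, intervalIntegral.integral_of_le hy]
  exact norm_integral_le_integral_norm _

lemma integral_norm_sub_comp_sub_le_mul (hd : Differentiable ℝ f) (hf' : Integrable (deriv f))
    {y : ℝ} (hy : 0 ≤ y) : ∫ ξ, ‖f ξ - f (ξ - y)‖ ≤ y * ∫ ξ, ‖deriv f ξ‖ := by
  have hint : Integrable (Function.uncurry fun ξ t : ℝ => ‖deriv f (ξ - t)‖)
      (volume.prod (volume.restrict (Ioc 0 y))) := by
    have h1 : Integrable (fun _ : ℝ => (1 : ℝ)) (volume.restrict (Ioc 0 y)) :=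
      integrable_const 1
    simpa [Function.uncurry_def] using
      h1.convolution_integrand (ContinuousLinearMap.mul ℝ ℝ) hf'.norm
  calc ∫ ξ, ‖f ξ - f (ξ - y)‖ ≤ ∫ ξ, ∫ t in Ioc 0 y, ‖deriv f (ξ - t)‖ :=
        integral_mono_of_nonneg (Eventually.of_forall fun ξ => norm_nonneg _)
          hint.integral_prod_left
          (Eventually.of_forall fun ξ => norm_sub_comp_sub_le_integral_norm_deriv hd hf' ξ hy)
    _ = ∫ t in Ioc 0 y, ∫ ξ, ‖deriv f ξ‖ := by
        rw [integral_integral_swap hint]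
        simp only [integral_sub_right_eq_self (fun ξ => ‖deriv f ξ‖)]
    _ = y * ∫ ξ, ‖deriv f ξ‖ := by simp [hy]

lemma integral_norm_sub_comp_sub_le_mul_min_one (hd : Differentiable ℝ f) (hf : Integrable f)
    (hf' : Integrable (deriv f)) {y : ℝ} (hy : 0 ≤ y) :
    ∫ ξ, ‖f ξ - f (ξ - y)‖ ≤ (2 * (∫ ξ, ‖f ξ‖) + ∫ ξ, ‖deriv f ξ‖) * min 1 y := by
  rw [mul_min_of_nonneg _ _ (by positivity), mul_one]
  refine le_min ?_ ?_
  · refine (integral_norm_sub_comp_sub_le_two_mul hf y).trans (le_add_of_nonneg_right ?_)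
    positivity
  · rw [add_mul, mul_comm (∫ ξ, ‖deriv f ξ‖)]
    refine (integral_norm_sub_comp_sub_le_mul hd hf' hy).trans (le_add_of_nonneg_left ?_)
    positivity

end L1Modulus

lemma marchaudIntegrable_of_integrable_deriv (hα0 : 0 < α) (hα1 : α < 1) {f : ℝ → ℂ}
    (hd : Differentiable ℝ f) (hf : Integrable f) (hf' : Integrable (deriv f)) :
    MarchaudIntegrable α f := by
  have hm := hd.continuous.measurable
  have hmeas : AEStronglyMeasurable
      (Function.uncurry fun ξ y : ℝ => (f ξ - f (ξ - y)) / ((y ^ (1 + α) : ℝ) : ℂ))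
      (volume.prod (volume.restrict (Ioi 0))) := by
    refine Measurable.aestronglyMeasurable ?_
    unfold Function.uncurry
    fun_prop
  have hslice : ∀ y : ℝ, Integrable fun ξ => (f ξ - f (ξ - y)) / ((y ^ (1 + α) : ℝ) : ℂ) :=
    fun y => (hf.sub (hf.comp_sub_right y)).div_const _
  unfold MarchaudIntegrable
  rw [integrable_prod_iff' hmeas]
  refine ⟨Eventually.of_forall hslice, ?_⟩
  refine ((integrableOn_min_one_div_rpow hα0 hα1).const_mul
    (2 * (∫ ξ, ‖f ξ‖) + ∫ ξ, ‖deriv f ξ‖)).mono' hmeas.norm.prod_swap.integral_prod_right' ?_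
  filter_upwards [ae_restrict_mem measurableSet_Ioi] with y (hy : 0 < y)
  have hmodulus := integral_norm_sub_comp_sub_le_mul_min_one hd hf hf' hy.le
  rw [Real.norm_of_nonneg (integral_nonneg fun _ => norm_nonneg _)]
  simp only [Function.uncurry, norm_div_ofReal_rpow _ hy.le]
  rw [integral_div, ← mul_div_assoc]
  gcongr

lemma rpow_le_one_add_pow_ceil {x s : ℝ} (hx : 0 ≤ x) (hs : 0 ≤ s) : x ^ s ≤ 1 + x ^ ⌈s⌉₊ := by
  rcases le_total 1 x with h | h
  · have hexp := Real.rpow_le_rpow_of_exponent_le h (Nat.le_ceil s)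
    rw [Real.rpow_natCast] at hexp
    exact hexp.trans (le_add_of_nonneg_left zero_le_one)
  · exact (Real.rpow_le_one hx h hs).trans (le_add_of_nonneg_right (pow_nonneg hx _))

lemma integrable_abs_rpow_mul_norm_FT (f : SchwartzMap ℝ ℂ) {s : ℝ} (hs : 0 ≤ s) :
    Integrable fun k : ℝ => |k| ^ s * ‖FT f k‖ := by
  have hFourier : Integrable fun v : ℝ => |v| ^ s * ‖𝓕 f v‖ := by
    refine ((𝓕 f).integrable.norm.add ((𝓕 f).integrable_pow_mul volume ⌈s⌉₊)).mono'
      (Continuous.aestronglyMeasurable ((continuous_abs.rpow_const fun _ => Or.inr hs).mul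
        (𝓕 f).continuous.norm)) (Eventually.of_forall fun v => ?_)
    have hpow := rpow_le_one_add_pow_ceil (abs_nonneg v) hs
    rw [Real.norm_of_nonneg (by positivity)]
    calc |v| ^ s * ‖𝓕 f v‖ ≤ (1 + |v| ^ ⌈s⌉₊) * ‖𝓕 f v‖ := by gcongr
      _ = ‖𝓕 f v‖ + ‖v‖ ^ ⌈s⌉₊ * ‖𝓕 f v‖ := by rw [add_mul, one_mul, Real.norm_eq_abs]
  refine ((hFourier.comp_div (R := 2 * Real.pi) (by positivity)).const_mul
    ((2 * Real.pi) ^ s)).congr (Eventually.of_forall fun k => ?_)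
  simp only
  rw [FT_eq_fourier, ← SchwartzMap.fourier_coe, abs_div,
    abs_of_pos (by positivity : 0 < 2 * Real.pi),
    Real.div_rpow (abs_nonneg k) (by positivity), ← mul_assoc, mul_div_cancel₀ _ (by positivity)]

theorem stmt2_general (hα0 : 0 < α) (hα1 : α < 1) {f : ℝ → ℂ} (hc : Continuous f)
    (hf : Integrable f) (hfα : Integrable fun k : ℝ => |k| ^ α * ‖FT f k‖)
    (hfW : MarchaudIntegrable α f) :
    (α / Real.Gamma (1 - α)) = -1 / Real.Gamma (-α) ∧
    (∀ ξ : ℝ, fracDeriv α f ξ = marchaud α f ξ) ∧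
    (∀ k : ℝ, FT (marchaud α f) k = (Complex.I * (k : ℂ)) ^ (α : ℂ) * FT f k) :=
  ⟨div_Gamma_one_sub hα0.ne', fracDeriv_eq_marchaud hα0 hα1 hc hf hfα, FT_marchaud hα0 hα1 hf hfW⟩

/-- for `0 < α < 1` and Schwartz `f`, the spectral fractional derivative has the
Marchaud representation `D^α f(ξ) = C_α ∫₀^∞ (f(ξ)−f(ξ−y)) y^{−1−α} dy` with
`C_α = α/Γ(1−α) = −1/Γ(−α)`; that is, this Marchaud expression has Fourier transform
`(ik)^α f̂(k)`. -/
theorem stmt2 (α : ℝ) (hα0 : 0 < α) (hα1 : α < 1) (f : SchwartzMap ℝ ℂ) :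
    (α / Real.Gamma (1 - α)) = -1 / Real.Gamma (-α) ∧
    (∀ ξ : ℝ, fracDeriv α (⇑f) ξ = marchaud α (⇑f) ξ) ∧
    (∀ k : ℝ, FT (marchaud α (⇑f)) k = (Complex.I * (k : ℂ)) ^ (α : ℂ) * FT (⇑f) k) :=
  stmt2_general hα0 hα1 f.continuous f.integrable (integrable_abs_rpow_mul_norm_FT f hα0.le)
    (marchaudIntegrable_of_integrable_deriv hα0 hα1 f.differentiable f.integrable
      (SchwartzMap.derivCLM ℝ ℂ f).integrable)
end
end

section
/- Let 0<α≤1 and s>1/2. There is a constant C=C(s,α) such that for all f,g ∈ H^s(ℝ), the function D^α f·g = (D^α f)g − f(D^α g) belongs to H^{s−α}(ℝ) and ‖D^α f·g‖_{H^{s−α}} ≤ C ‖f‖_{H^s} ‖g‖_{H^s}. -/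
open MeasureTheory

noncomputable section

/-- Squared `H^s` norm, expressed on the Fourier side:
`‖f‖²_{H^s} = (1/2π) ∫ (1+|k|²)^s |f̂(k)|² dk`, where `F = f̂`. -/
def hsNormSq (s : ℝ) (F : ℝ → ℂ) : ℝ :=
  (2 * Real.pi)⁻¹ * ∫ k : ℝ, (1 + k ^ 2) ^ s * ‖F k‖ ^ 2

/-- Membership of a function in `H^s(ℝ)`, expressed through its Fourier transform `F = f̂`:
`F` is (a.e. strongly) measurable and `(1+|k|²)^s |F(k)|²` is integrable. -/
def MemHsFT (s : ℝ) (F : ℝ → ℂ) : Prop :=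
  AEStronglyMeasurable F volume ∧
    Integrable (fun k : ℝ => (1 + k ^ 2) ^ s * ‖F k‖ ^ 2) volume

/-- Fourier transform of the bilinear expression `D^α f·g = (D^α f) g − f (D^α g)`,
computed from the Fourier transforms `F = f̂`, `G = ĝ`: since products become convolutions,
`F[D^α f·g](k) = (1/2π) ∫ ((im)^α − (i(k−m))^α) F(m) G(k−m) dm`
(principal branch powers). -/
def hirotaSymbolFT (α : ℝ) (F G : ℝ → ℂ) (k : ℝ) : ℂ :=
  ((2 * Real.pi : ℝ) : ℂ)⁻¹ *
    ∫ m : ℝ, ((Complex.I * (m : ℂ)) ^ (α : ℂ) - (Complex.I * ((k - m : ℝ) : ℂ)) ^ (α : ℂ)) *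
      F m * G (k - m)

/-!
On the Fourier side `D^α` is bounded from `H^s` to `H^{s-α}` because its symbol has modulus at most
`⟨m⟩^α`, so each of the two terms of `D^α f·g` is a product of an `H^{s-α}` function with an `H^s`
function. The estimate is therefore an instance of the fact that `H^r` is a module over `H^s` when
`s > 1/2` and `|r| ≤ s`, which for `r = s - α` means `0 ≤ α ≤ 2s`.

The module property comes from the triangle inequality `⟨x + y⟩ ≤ ⟨x⟩ + ⟨y⟩`, which gives
`⟨x + y⟩^r ≤ 2^s (⟨x + y⟩^{-s} + ⟨x⟩^{-s} + ⟨y⟩^{-s}) ⟨x⟩^r ⟨y⟩^s`. Since `⟨·⟩^{-s}` is square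
integrable, the first term is controlled by the boundedness of the convolution of two `L²`
functions, and the other two by Young's inequality for `L¹` and `L²`.
-/

open scoped ENNReal NNReal

section JapaneseBracket

variable {E : Type*} [SeminormedAddCommGroup E]

/-- The Japanese bracket `⟨x⟩ = (1 + ‖x‖²) ^ (1 / 2)`, which weights the Fourier transform in
Sobolev norms. It takes values in `ℝ≥0` because its real powers multiply `ℝ≥0∞`-valued functions. -/
def japaneseBracket (x : E) : ℝ≥0 := NNReal.sqrt (1 + ‖x‖₊ ^ 2)

lemma sq_japaneseBracket (x : E) : japaneseBracket x ^ 2 = 1 + ‖x‖₊ ^ 2 := NNReal.sq_sqrt _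

lemma japaneseBracket_pos (x : E) : 0 < japaneseBracket x := by
  simp [japaneseBracket]

lemma nnnorm_le_japaneseBracket (x : E) : ‖x‖₊ ≤ japaneseBracket x := by
  rw [japaneseBracket, NNReal.le_sqrt_iff_sq_le]
  exact le_add_self

lemma japaneseBracket_neg (x : E) : japaneseBracket (-x) = japaneseBracket x := by
  simp [japaneseBracket]

lemma japaneseBracket_add_le (x y : E) :
    japaneseBracket (x + y) ≤ japaneseBracket x + japaneseBracket y := by
  have hxy : ‖x‖₊ * ‖y‖₊ ≤ japaneseBracket x * japaneseBracket y :=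
    mul_le_mul' (nnnorm_le_japaneseBracket x) (nnnorm_le_japaneseBracket y)
  refine (NNReal.sqrt_le_iff_le_sq).2 ?_
  calc 1 + ‖x + y‖₊ ^ 2 ≤ 1 + (‖x‖₊ + ‖y‖₊) ^ 2 := by gcongr; exact nnnorm_add_le x y
    _ = 1 + ‖x‖₊ ^ 2 + ‖y‖₊ ^ 2 + 2 * (‖x‖₊ * ‖y‖₊) := by ring
    _ ≤ 1 + ‖x‖₊ ^ 2 + (1 + ‖y‖₊ ^ 2) + 2 * (japaneseBracket x * japaneseBracket y) := by
        gcongr; exact le_add_self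
    _ = (japaneseBracket x + japaneseBracket y) ^ 2 := by
        rw [← sq_japaneseBracket, ← sq_japaneseBracket]; ring

lemma rpow_add_self_le_of_le_add {a b c : ℝ≥0} {s : ℝ} (hs : 0 ≤ s) (h : a ≤ b + c) :
    a ^ (s + s) ≤ 2 ^ s * (a ^ s * b ^ s + a ^ s * c ^ s) := by
  have hadd : a ^ s ≤ 2 ^ s * (b ^ s + c ^ s) := by
    have h' := ENNReal.add_rpow_le_two_rpow_mul_rpow_add_rpow b c hs
    refine (NNReal.rpow_le_rpow h hs).trans ?_
    rw [← ENNReal.coe_le_coe]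
    simpa [ENNReal.coe_rpow_of_nonneg _ hs] using h'
  calc a ^ (s + s) = a ^ s * a ^ s := NNReal.rpow_add_of_nonneg a hs hs
    _ ≤ a ^ s * (2 ^ s * (b ^ s + c ^ s)) := by gcongr
    _ = 2 ^ s * (a ^ s * b ^ s + a ^ s * c ^ s) := by ring

lemma rpow_add_mul_rpow_sub_le {a b c : ℝ≥0} {r s : ℝ} (hrs : |r| ≤ s)
    (hab : a ≤ b + c) (hba : b ≤ a + c) :
    a ^ (s + r) * b ^ (s - r) ≤ 2 ^ s * (a ^ s * b ^ s + a ^ s * c ^ s + b ^ s * c ^ s) := by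
  obtain ⟨hr, hr'⟩ := abs_le.1 hrs
  have hs : 0 ≤ s := (abs_nonneg r).trans hrs
  calc a ^ (s + r) * b ^ (s - r)
      ≤ max a b ^ (s + r) * max a b ^ (s - r) := by
        exact mul_le_mul' (NNReal.rpow_le_rpow (le_max_left a b) (by linarith))
          (NNReal.rpow_le_rpow (le_max_right a b) (by linarith))
    _ = max a b ^ (s + s) := by
        rw [← NNReal.rpow_add_of_nonneg _ (by linarith) (by linarith)]
        ring_nf
    _ ≤ 2 ^ s * (a ^ s * b ^ s + a ^ s * c ^ s + b ^ s * c ^ s) := by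
        rcases le_total b a with h | h
        · rw [max_eq_left h]
          exact (rpow_add_self_le_of_le_add hs hab).trans (mul_le_mul' le_rfl le_self_add)
        · rw [max_eq_right h, add_right_comm, mul_comm (a ^ s) (b ^ s)]
          exact (rpow_add_self_le_of_le_add hs hba).trans (mul_le_mul' le_rfl le_self_add)

lemma rpow_le_rpow_neg_add_mul {a b c : ℝ≥0} {r s : ℝ} (ha : 0 < a) (hb : 0 < b) (hc : 0 < c)
    (hrs : |r| ≤ s) (hab : a ≤ b + c) (hba : b ≤ a + c) :
    a ^ r ≤ 2 ^ s * ((a ^ (-s) + b ^ (-s) + c ^ (-s)) * (b ^ r * c ^ s)) := by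
  have key := rpow_add_mul_rpow_sub_le hrs hab hba
  rw [NNReal.rpow_add ha.ne', NNReal.rpow_sub hb.ne'] at key
  simp only [NNReal.rpow_neg]
  have := NNReal.rpow_pos ha (p := s)
  have := NNReal.rpow_pos hb (p := s)
  have := NNReal.rpow_pos hc (p := s)
  have := NNReal.rpow_pos hb (p := r)
  calc a ^ r = (a ^ s * a ^ r * (b ^ s / b ^ r)) * (b ^ r / (a ^ s * b ^ s)) := by field_simp
    _ ≤ 2 ^ s * (a ^ s * b ^ s + a ^ s * c ^ s + b ^ s * c ^ s) * (b ^ r / (a ^ s * b ^ s)) := by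
      gcongr
    _ = _ := by field_simp; ring

theorem japaneseBracket_add_rpow_le {r s : ℝ} (hrs : |r| ≤ s) (x y : E) :
    japaneseBracket (x + y) ^ r ≤
      2 ^ s * ((japaneseBracket (x + y) ^ (-s) + japaneseBracket x ^ (-s) +
        japaneseBracket y ^ (-s)) * (japaneseBracket x ^ r * japaneseBracket y ^ s)) := by
  refine rpow_le_rpow_neg_add_mul (japaneseBracket_pos _) (japaneseBracket_pos _)
    (japaneseBracket_pos _) hrs (japaneseBracket_add_le x y) ?_
  simpa [japaneseBracket_neg] using japaneseBracket_add_le (x + y) (-y)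

end JapaneseBracket

section HolderInequality

variable {X : Type*} [MeasurableSpace X] {μ : Measure X}

lemma eLpNorm_mul_const {f : X → ℝ≥0∞} (hf : AEMeasurable f μ) (c p : ℝ≥0∞) :
    eLpNorm (fun x ↦ f x * c) p μ = eLpNorm f p μ * c := by
  rcases eq_or_ne p 0 with rfl | hp
  · simp
  rcases eq_or_ne p ∞ with rfl | hp'
  · simp only [eLpNorm_exponent_top, eLpNormEssSup, enorm_eq_self, mul_comm _ c,
      ENNReal.essSup_const_mul]
  have h := ENNReal.toReal_pos hp hp'
  simp only [eLpNorm_eq_lintegral_rpow_enorm_toReal hp hp', enorm_eq_self,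
    ENNReal.mul_rpow_of_nonneg _ _ h.le]
  rw [lintegral_mul_const'' _ (by fun_prop), ENNReal.mul_rpow_of_nonneg _ _ (by positivity),
    ← ENNReal.rpow_mul, mul_one_div_cancel h.ne', ENNReal.rpow_one]

lemma lintegral_mul_le_eLpNorm_top_mul (f : X → ℝ≥0∞) {g : X → ℝ≥0∞} (hg : AEMeasurable g μ) :
    ∫⁻ x, f x * g x ∂μ ≤ eLpNorm f ∞ μ * ∫⁻ x, g x ∂μ := by
  rw [← lintegral_const_mul'' _ hg]
  refine lintegral_mono_ae ?_
  filter_upwards [enorm_ae_le_eLpNormEssSup f μ] with x hx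
  gcongr
  simpa using hx

lemma lintegral_mul_le_eLpNorm_mul_eLpNorm {f g : X → ℝ≥0∞} (hf : AEMeasurable f μ)
    (hg : AEMeasurable g μ) (p q : ℝ≥0∞) [p.HolderConjugate q] :
    ∫⁻ x, f x * g x ∂μ ≤ eLpNorm f p μ * eLpNorm g q μ := by
  rcases eq_or_ne p ∞ with rfl | hp
  · obtain rfl := (ENNReal.HolderConjugate.eq_top_iff_eq_one ∞ q).1 rfl
    simpa [eLpNorm_one_eq_lintegral_enorm] using lintegral_mul_le_eLpNorm_top_mul f hg
  rcases eq_or_ne q ∞ with rfl | hq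
  · obtain rfl := (ENNReal.HolderConjugate.eq_top_iff_eq_one ∞ p).1 rfl
    simpa [eLpNorm_one_eq_lintegral_enorm, mul_comm] using lintegral_mul_le_eLpNorm_top_mul g hf
  have h := ENNReal.lintegral_mul_le_Lp_mul_Lq μ
    (ENNReal.HolderConjugate.toReal_of_ne_top hp hq) hf hg
  simpa [eLpNorm_eq_lintegral_rpow_enorm_toReal (ENNReal.HolderConjugate.ne_zero p q) hp,
    eLpNorm_eq_lintegral_rpow_enorm_toReal (ENNReal.HolderConjugate.ne_zero q p) hq] using h

end HolderInequality

section Convolution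

variable {G : Type*} [AddCommGroup G] [MeasurableSpace G] [MeasurableAdd₂ G] [MeasurableNeg G]
  {μ : Measure G} [μ.IsAddLeftInvariant] {f g : G → ℝ≥0∞}

lemma lintegral_lconvolution [SFinite μ] (hf : AEMeasurable f μ) (hg : AEMeasurable g μ) :
    ∫⁻ x, (f ⋆ₗ[μ] g) x ∂μ = (∫⁻ x, f x ∂μ) * ∫⁻ x, g x ∂μ := by
  simp only [lconvolution_def]
  rw [lintegral_lintegral_swap (by fun_prop), ← lintegral_mul_const'' _ hf]
  refine lintegral_congr fun y ↦ ?_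
  rw [lintegral_const_mul'' _ (by fun_prop), lintegral_add_left_eq_self g (-y)]

variable [μ.IsNegInvariant]

lemma lconvolution_le_eLpNorm_mul_eLpNorm (hf : AEMeasurable f μ) (hg : AEMeasurable g μ)
    (p q : ℝ≥0∞) [p.HolderConjugate q] (x : G) :
    (f ⋆ₗ[μ] g) x ≤ eLpNorm f p μ * eLpNorm g q μ := by
  have hx : MeasurePreserving (x - ·) μ μ := μ.measurePreserving_sub_left x
  simp only [lconvolution_def, neg_add_eq_sub]
  rw [← eLpNorm_comp_measurePreserving hg.aestronglyMeasurable hx]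
  exact lintegral_mul_le_eLpNorm_mul_eLpNorm hf
    (hg.comp_quasiMeasurePreserving hx.quasiMeasurePreserving) p q

lemma lconvolution_le_rpow_lconvolution_mul {q : ℝ} (hq : 1 ≤ q) (hf : AEMeasurable f μ)
    (hg : AEMeasurable g μ) (x : G) :
    (f ⋆ₗ[μ] g) x ≤ (((fun y ↦ f y ^ q) ⋆ₗ[μ] g) x) ^ (1 / q) *
      (∫⁻ y, g y ∂μ) ^ (1 - 1 / q) := by
  have hgx : AEMeasurable (fun y ↦ g (x - y)) μ :=
    hg.comp_quasiMeasurePreserving (μ.measurePreserving_sub_left x).quasiMeasurePreserving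
  have hq0 : 0 < q := by linarith
  have hq1 : 1 / q ≤ 1 := (div_le_one hq0).2 hq
  simp only [lconvolution_def, neg_add_eq_sub]
  calc ∫⁻ y, f y * g (x - y) ∂μ
      = ∫⁻ y, (f y ^ q * g (x - y)) ^ (1 / q) * g (x - y) ^ (1 - 1 / q) ∂μ := by
        refine lintegral_congr fun y ↦ ?_
        rw [ENNReal.mul_rpow_of_nonneg _ _ (by positivity), ← ENNReal.rpow_mul,
          mul_one_div_cancel hq0.ne', ENNReal.rpow_one, mul_assoc,
          ← ENNReal.rpow_add_of_nonneg _ _ (by positivity) (by linarith), add_sub_cancel,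
          ENNReal.rpow_one]
    _ ≤ (∫⁻ y, f y ^ q * g (x - y) ∂μ) ^ (1 / q) * (∫⁻ y, g (x - y) ∂μ) ^ (1 - 1 / q) :=
        ENNReal.lintegral_mul_norm_pow_le ((hf.pow_const q).mul hgx) hgx (by positivity)
          (by linarith) (by ring)
    _ = _ := by rw [lintegral_sub_left_eq_self g x]

theorem eLpNorm_lconvolution_le [SFinite μ] {p : ℝ≥0∞} (hp : 1 ≤ p) (hf : AEMeasurable f μ)
    (hg : AEMeasurable g μ) :
    eLpNorm (f ⋆ₗ[μ] g) p μ ≤ eLpNorm f p μ * ∫⁻ x, g x ∂μ := by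
  rcases eq_or_ne p ∞ with rfl | hp'
  · refine eLpNormEssSup_le_of_ae_enorm_bound (.of_forall fun x ↦ ?_)
    simpa only [eLpNorm_one_eq_lintegral_enorm, enorm_eq_self] using
      lconvolution_le_eLpNorm_mul_eLpNorm hf hg ∞ 1 x
  have hp0 : p ≠ 0 := (zero_lt_one.trans_le hp).ne'
  have hq : 1 ≤ p.toReal := by simpa using ENNReal.toReal_mono hp' hp
  set q := p.toReal
  have hq0 : 0 < q := by linarith
  simp only [eLpNorm_eq_lintegral_rpow_enorm_toReal hp0 hp', enorm_eq_self]
  set N := ∫⁻ x, g x ∂μ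
  calc (∫⁻ x, (f ⋆ₗ[μ] g) x ^ q ∂μ) ^ (1 / q)
      ≤ (∫⁻ x, ((fun y ↦ f y ^ q) ⋆ₗ[μ] g) x * N ^ (q - 1) ∂μ) ^ (1 / q) := by
        gcongr with x
        refine (ENNReal.rpow_le_rpow (lconvolution_le_rpow_lconvolution_mul hq hf hg x)
          hq0.le).trans_eq ?_
        rw [ENNReal.mul_rpow_of_nonneg _ _ hq0.le, ← ENNReal.rpow_mul, ← ENNReal.rpow_mul,
          one_div_mul_cancel hq0.ne', ENNReal.rpow_one, sub_mul, one_div_mul_cancel hq0.ne',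
          one_mul]
    _ = ((∫⁻ x, f x ^ q ∂μ) * (N * N ^ (q - 1))) ^ (1 / q) := by
        rw [lintegral_mul_const'' _ (by fun_prop), lintegral_lconvolution (by fun_prop) hg,
          mul_assoc]
    _ = (∫⁻ x, f x ^ q ∂μ) ^ (1 / q) * N := by
        have hN : N * N ^ (q - 1) = N ^ q := by
          nth_rw 1 [← ENNReal.rpow_one N]
          rw [← ENNReal.rpow_add_of_nonneg _ _ zero_le_one (by linarith), add_sub_cancel]
        rw [hN, ENNReal.mul_rpow_of_nonneg _ _ (by positivity), ← ENNReal.rpow_mul,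
          mul_one_div_cancel hq0.ne', ENNReal.rpow_one]

end Convolution

section WeightedNorm

variable {E : Type*} [SeminormedAddCommGroup E]

/-- The weighted function `⟨·⟩ ^ s f`, the Fourier-side form of `(1 - Δ) ^ (s / 2)`. -/
def japaneseWeight (s : ℝ) (f : E → ℝ≥0∞) (x : E) : ℝ≥0∞ :=
  (japaneseBracket x ^ s : ℝ≥0) * f x

lemma japaneseWeight_add_left (r s : ℝ) (f : E → ℝ≥0∞) :
    japaneseWeight (r + s) f = japaneseWeight r (japaneseWeight s f) := by
  ext x
  simp only [japaneseWeight, NNReal.rpow_add (japaneseBracket_pos x).ne', ENNReal.coe_mul,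
    mul_assoc]

lemma japaneseWeight_mono (s : ℝ) : Monotone (japaneseWeight (E := E) s) :=
  fun _ _ hfg x ↦ mul_le_mul' le_rfl (hfg x)

lemma japaneseWeight_add_right (s : ℝ) (f g : E → ℝ≥0∞) :
    japaneseWeight s (f + g) = japaneseWeight s f + japaneseWeight s g :=
  funext fun _ ↦ mul_add _ _ _

variable [MeasurableSpace E]

/-- The extended `H^s` norm of a distribution whose Fourier transform has modulus `f`, up to the
normalisation of the measure `μ`. -/
def hsENorm (s : ℝ) (f : E → ℝ≥0∞) (μ : Measure E) : ℝ≥0∞ :=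
  eLpNorm (japaneseWeight s f) 2 μ

variable {μ : Measure E} {f g : E → ℝ≥0∞}

lemma hsENorm_mono (s : ℝ) (hfg : f ≤ g) : hsENorm s f μ ≤ hsENorm s g μ :=
  eLpNorm_mono_enorm (japaneseWeight_mono s hfg)

lemma hsENorm_sq (s : ℝ) (f : E → ℝ≥0∞) :
    hsENorm s f μ ^ 2 = ∫⁻ x, ENNReal.ofReal ((1 + ‖x‖ ^ 2) ^ s) * f x ^ 2 ∂μ := by
  have h := eLpNorm_nnreal_pow_eq_lintegral (f := japaneseWeight s f) (μ := μ)
    (two_ne_zero (α := ℝ≥0))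
  simp only [NNReal.coe_ofNat, ENNReal.rpow_ofNat, ENNReal.coe_ofNat, enorm_eq_self] at h
  rw [hsENorm, h]
  refine lintegral_congr fun x ↦ ?_
  have hx : (1 + ‖x‖ ^ 2) ^ s = ((japaneseBracket x ^ s) ^ 2 : ℝ≥0) := by
    rw [NNReal.coe_pow, NNReal.coe_rpow, Real.rpow_pow_comm NNReal.zero_le_coe,
      ← NNReal.coe_pow, sq_japaneseBracket]
    simp
  rw [japaneseWeight, mul_pow, hx, ENNReal.ofReal_coe_nnreal, ENNReal.coe_pow]

lemma hsENorm_japaneseWeight (r s : ℝ) (f : E → ℝ≥0∞) :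
    hsENorm r (japaneseWeight s f) μ = hsENorm (r + s) f μ := by
  rw [hsENorm, hsENorm, japaneseWeight_add_left]

variable [BorelSpace E]

@[fun_prop]
lemma aemeasurable_japaneseWeight (s : ℝ) (hf : AEMeasurable f μ) :
    AEMeasurable (japaneseWeight s f) μ := by
  have hbracket : Measurable (japaneseBracket : E → ℝ≥0) := by
    unfold japaneseBracket
    exact (NNReal.continuous_sqrt.comp (by fun_prop)).measurable
  unfold japaneseWeight
  fun_prop

lemma lintegral_japaneseWeight_neg_le (s : ℝ) (hf : AEMeasurable f μ) :
    ∫⁻ x, japaneseWeight (-s) f x ∂μ ≤ hsENorm (-s) 1 μ * eLpNorm f 2 μ := by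
  calc ∫⁻ x, japaneseWeight (-s) f x ∂μ = ∫⁻ x, japaneseWeight (-s) 1 x * f x ∂μ := by
        simp only [japaneseWeight, Pi.one_apply, mul_one]
    _ ≤ hsENorm (-s) 1 μ * eLpNorm f 2 μ := lintegral_mul_le_eLpNorm_mul_eLpNorm
        (aemeasurable_japaneseWeight (-s) aemeasurable_one) hf 2 2

lemma hsENorm_le_mul_of_le (s : ℝ) {c : ℝ≥0∞} (hfc : ∀ x, f x ≤ c) :
    hsENorm s f μ ≤ hsENorm s 1 μ * c := by
  have hw : AEMeasurable (japaneseWeight s (1 : E → ℝ≥0∞)) μ :=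
    aemeasurable_japaneseWeight s aemeasurable_one
  rw [hsENorm, hsENorm, ← eLpNorm_mul_const hw]
  refine eLpNorm_mono_enorm fun x ↦ ?_
  simpa only [japaneseWeight, Pi.one_apply, mul_one, enorm_eq_self] using
    mul_le_mul' le_rfl (hfc x)

lemma hsENorm_add_le (s : ℝ) (hf : AEMeasurable f μ) (hg : AEMeasurable g μ) :
    hsENorm s (f + g) μ ≤ hsENorm s f μ + hsENorm s g μ := by
  rw [hsENorm, japaneseWeight_add_right]
  exact eLpNorm_add_le (aemeasurable_japaneseWeight s hf).aestronglyMeasurable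
    (aemeasurable_japaneseWeight s hg).aestronglyMeasurable one_le_two

variable [SecondCountableTopology E] [SFinite μ] [μ.IsAddLeftInvariant]

lemma japaneseWeight_lconvolution_le {r s : ℝ} (hrs : |r| ≤ s) (hf : AEMeasurable f μ)
    (hg : AEMeasurable g μ) :
    japaneseWeight r (f ⋆ₗ[μ] g) ≤ fun x ↦
      (japaneseWeight (-s) (japaneseWeight r f ⋆ₗ[μ] japaneseWeight s g) +
        japaneseWeight (-s) (japaneseWeight r f) ⋆ₗ[μ] japaneseWeight s g +
        japaneseWeight r f ⋆ₗ[μ] japaneseWeight (-s) (japaneseWeight s g)) x * (2 ^ s : ℝ≥0) := by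
  intro x
  set u := japaneseWeight r f
  set v := japaneseWeight s g
  have hu : AEMeasurable u μ := aemeasurable_japaneseWeight r hf
  have hv : AEMeasurable v μ := aemeasurable_japaneseWeight s hg
  have kernel (y : E) : (japaneseBracket x ^ r : ℝ≥0) * (f y * g (-y + x)) ≤
      ((japaneseBracket x ^ (-s) : ℝ≥0) * (u y * v (-y + x)) +
        japaneseWeight (-s) u y * v (-y + x) + u y * japaneseWeight (-s) v (-y + x)) *
          (2 ^ s : ℝ≥0) := by
    have h := japaneseBracket_add_rpow_le hrs y (-y + x)
    rw [add_neg_cancel_left] at h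
    calc _ ≤ _ := mul_le_mul' (ENNReal.coe_le_coe.2 h) le_rfl
      _ = _ := by simp only [u, v, japaneseWeight]; push_cast; ring
  calc japaneseWeight r (f ⋆ₗ[μ] g) x
      = ∫⁻ y, (japaneseBracket x ^ r : ℝ≥0) * (f y * g (-y + x)) ∂μ :=
        (lintegral_const_mul'' _ (by fun_prop)).symm
    _ ≤ _ := lintegral_mono kernel
    _ = _ := by
      rw [lintegral_mul_const'' _ (by fun_prop), lintegral_add_left' (by fun_prop),
        lintegral_add_left' (by fun_prop), lintegral_const_mul'' _ (by fun_prop)]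
      rfl

theorem hsENorm_lconvolution_le [μ.IsNegInvariant] {r s : ℝ} (hrs : |r| ≤ s)
    (hf : AEMeasurable f μ) (hg : AEMeasurable g μ) :
    hsENorm r (f ⋆ₗ[μ] g) μ ≤
      3 * (2 ^ s : ℝ≥0) * hsENorm (-s) 1 μ * hsENorm r f μ * hsENorm s g μ := by
  set u := japaneseWeight r f
  set v := japaneseWeight s g
  set P := hsENorm (-s) 1 μ
  have hu : AEMeasurable u μ := aemeasurable_japaneseWeight r hf
  have hv : AEMeasurable v μ := aemeasurable_japaneseWeight s hg
  have h₁ : eLpNorm (japaneseWeight (-s) (u ⋆ₗ[μ] v)) 2 μ ≤ P * (eLpNorm u 2 μ * eLpNorm v 2 μ) :=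
    hsENorm_le_mul_of_le (-s) (lconvolution_le_eLpNorm_mul_eLpNorm hu hv 2 2)
  have h₂ : eLpNorm (japaneseWeight (-s) u ⋆ₗ[μ] v) 2 μ ≤ P * (eLpNorm u 2 μ * eLpNorm v 2 μ) := by
    rw [lconvolution_comm, ← mul_assoc, mul_comm]
    exact (eLpNorm_lconvolution_le one_le_two hv (by fun_prop)).trans
      (mul_le_mul' le_rfl (lintegral_japaneseWeight_neg_le s hu))
  have h₃ : eLpNorm (u ⋆ₗ[μ] japaneseWeight (-s) v) 2 μ ≤ P * (eLpNorm u 2 μ * eLpNorm v 2 μ) := by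
    rw [mul_left_comm]
    exact (eLpNorm_lconvolution_le one_le_two hu (by fun_prop)).trans
      (mul_le_mul' le_rfl (lintegral_japaneseWeight_neg_le s hv))
  calc hsENorm r (f ⋆ₗ[μ] g) μ
      ≤ eLpNorm (japaneseWeight (-s) (u ⋆ₗ[μ] v) + japaneseWeight (-s) u ⋆ₗ[μ] v +
          u ⋆ₗ[μ] japaneseWeight (-s) v) 2 μ * (2 ^ s : ℝ≥0) := by
        rw [← eLpNorm_mul_const (by fun_prop)]
        exact eLpNorm_mono_enorm (japaneseWeight_lconvolution_le hrs hf hg)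
    _ ≤ (P * (eLpNorm u 2 μ * eLpNorm v 2 μ) + P * (eLpNorm u 2 μ * eLpNorm v 2 μ) +
          P * (eLpNorm u 2 μ * eLpNorm v 2 μ)) * (2 ^ s : ℝ≥0) := by
        gcongr
        refine (eLpNorm_add_le (by fun_prop) (by fun_prop) one_le_two).trans (add_le_add ?_ h₃)
        exact (eLpNorm_add_le (by fun_prop) (by fun_prop) one_le_two).trans (add_le_add h₁ h₂)
    _ = 3 * (2 ^ s : ℝ≥0) * P * hsENorm r f μ * hsENorm s g μ := by
        simp only [hsENorm]
        ring

lemma hsENorm_japaneseWeight_lconvolution_add_le [μ.IsNegInvariant] {α s : ℝ}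
    (hα : 0 ≤ α) (hαs : α ≤ 2 * s) (hf : AEMeasurable f μ) (hg : AEMeasurable g μ) :
    hsENorm (s - α) (japaneseWeight α f ⋆ₗ[μ] g + f ⋆ₗ[μ] japaneseWeight α g) μ ≤
      6 * (2 ^ s : ℝ≥0) * hsENorm (-s) 1 μ * hsENorm s f μ * hsENorm s g μ := by
  have hrs : |s - α| ≤ s := abs_le.2 ⟨by linarith, by linarith⟩
  have hfg := hsENorm_lconvolution_le hrs (aemeasurable_japaneseWeight α hf) hg
  have hgf := hsENorm_lconvolution_le hrs (aemeasurable_japaneseWeight α hg) hf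
  rw [hsENorm_japaneseWeight, sub_add_cancel] at hfg hgf
  rw [lconvolution_comm] at hgf
  calc hsENorm (s - α) (japaneseWeight α f ⋆ₗ[μ] g + f ⋆ₗ[μ] japaneseWeight α g) μ
      ≤ hsENorm (s - α) (japaneseWeight α f ⋆ₗ[μ] g) μ +
          hsENorm (s - α) (f ⋆ₗ[μ] japaneseWeight α g) μ :=
        hsENorm_add_le (s - α) (by fun_prop) (by fun_prop)
    _ ≤ _ := add_le_add hfg hgf
    _ = _ := by ring

end WeightedNorm

lemma hsENorm_one_lt_top {E : Type*} [NormedAddCommGroup E] [NormedSpace ℝ E]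
    [FiniteDimensional ℝ E] [MeasurableSpace E] [BorelSpace E] (μ : Measure E)
    [μ.IsAddHaarMeasure] {s : ℝ} (hs : Module.finrank ℝ E < 2 * s) : hsENorm (-s) 1 μ < ∞ := by
  have h : hsENorm (-s) 1 μ ^ 2 < ∞ := by
    rw [hsENorm_sq]
    simpa [neg_div] using (integrable_rpow_neg_one_add_norm_sq (μ := μ) hs).lintegral_lt_top
  simpa using h

section Hirota

variable {α s : ℝ} {F G : ℝ → ℂ}

lemma enorm_I_mul_cpow_le (hα : 0 ≤ α) (m : ℝ) :
    ‖(Complex.I * m) ^ (α : ℂ)‖ₑ ≤ (japaneseBracket m ^ α : ℝ≥0) := by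
  have h : ‖(Complex.I * m) ^ (α : ℂ)‖₊ = ‖m‖₊ ^ α := by
    ext
    simp [Complex.norm_cpow_real]
  rw [enorm_eq_nnnorm, h]
  exact_mod_cast NNReal.rpow_le_rpow (nnnorm_le_japaneseBracket m) hα

lemma aestronglyMeasurable_hirotaSymbolFT (hF : AEStronglyMeasurable F)
    (hG : AEStronglyMeasurable G) : AEStronglyMeasurable (hirotaSymbolFT α F G) := by
  unfold hirotaSymbolFT
  refine AEStronglyMeasurable.const_mul ?_ _
  have hF' : AEStronglyMeasurable (fun p : ℝ × ℝ ↦ F p.2) (volume.prod volume) := hF.comp_snd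
  have hG' : AEStronglyMeasurable (fun p : ℝ × ℝ ↦ G (p.1 - p.2)) (volume.prod volume) :=
    hG.comp_quasiMeasurePreserving (quasiMeasurePreserving_sub_of_right_invariant volume volume)
  have hdiff : Measurable fun p : ℝ × ℝ ↦
      (Complex.I * (p.2 : ℂ)) ^ (α : ℂ) - (Complex.I * ((p.1 - p.2 : ℝ) : ℂ)) ^ (α : ℂ) := by
    fun_prop
  exact ((hdiff.aestronglyMeasurable.mul hF').mul hG').integral_prod_right'

lemma enorm_hirotaSymbolFT_le (hα : 0 ≤ α) (hF : AEStronglyMeasurable F)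
    (hG : AEStronglyMeasurable G) (k : ℝ) :
    ‖hirotaSymbolFT α F G k‖ₑ ≤
      (japaneseWeight α (‖F ·‖ₑ) ⋆ₗ (‖G ·‖ₑ) + (‖F ·‖ₑ) ⋆ₗ japaneseWeight α (‖G ·‖ₑ)) k := by
  have hπ : ‖((2 * Real.pi : ℝ) : ℂ)⁻¹‖ₑ ≤ 1 := by
    rw [← enorm_one (G := ℂ), enorm_le_iff_norm_le, norm_inv, norm_one, Complex.norm_real,
      Real.norm_of_nonneg (by positivity)]
    exact inv_le_one_of_one_le₀ (by linarith [Real.pi_gt_three])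
  have hm (m : ℝ) : ‖((Complex.I * (m : ℂ)) ^ (α : ℂ) -
      (Complex.I * ((k - m : ℝ) : ℂ)) ^ (α : ℂ)) * F m * G (k - m)‖ₑ ≤
      japaneseWeight α (‖F ·‖ₑ) m * ‖G (-m + k)‖ₑ +
        ‖F m‖ₑ * japaneseWeight α (‖G ·‖ₑ) (-m + k) := by
    rw [enorm_mul, enorm_mul, neg_add_eq_sub]
    calc _ ≤ ((japaneseBracket m ^ α : ℝ≥0) + (japaneseBracket (k - m) ^ α : ℝ≥0)) *
          ‖F m‖ₑ * ‖G (k - m)‖ₑ := by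
          gcongr
          exact enorm_sub_le.trans
            (add_le_add (enorm_I_mul_cpow_le hα m) (enorm_I_mul_cpow_le hα (k - m)))
      _ = _ := by simp only [japaneseWeight]; ring
  calc ‖hirotaSymbolFT α F G k‖ₑ
      ≤ 1 * ∫⁻ m, (japaneseWeight α (‖F ·‖ₑ) m * ‖G (-m + k)‖ₑ +
        ‖F m‖ₑ * japaneseWeight α (‖G ·‖ₑ) (-m + k)) := by
        rw [hirotaSymbolFT, enorm_mul]
        exact mul_le_mul' hπ ((enorm_integral_le_lintegral_enorm _).trans (lintegral_mono hm))
    _ = _ := by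
        rw [one_mul, lintegral_add_left' (by fun_prop)]
        rfl

lemma hsENorm_hirotaSymbolFT_le (hα : 0 ≤ α) (hαs : α ≤ 2 * s) (hF : AEStronglyMeasurable F)
    (hG : AEStronglyMeasurable G) :
    hsENorm (s - α) (‖hirotaSymbolFT α F G ·‖ₑ) volume ≤
      6 * (2 ^ s : ℝ≥0) * hsENorm (-s) 1 (volume : Measure ℝ) * hsENorm s (‖F ·‖ₑ) volume *
        hsENorm s (‖G ·‖ₑ) volume :=
  (hsENorm_mono (s - α) (enorm_hirotaSymbolFT_le hα hF hG)).trans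
    (hsENorm_japaneseWeight_lconvolution_add_le hα hαs hF.enorm hG.enorm)

lemma hsENorm_enorm_sq (s : ℝ) (F : ℝ → ℂ) :
    hsENorm s (‖F ·‖ₑ) volume ^ 2 = ∫⁻ k, ENNReal.ofReal ((1 + k ^ 2) ^ s * ‖F k‖ ^ 2) := by
  rw [hsENorm_sq]
  refine lintegral_congr fun k ↦ ?_
  rw [ENNReal.ofReal_mul (by positivity), ENNReal.ofReal_pow (norm_nonneg _), ofReal_norm,
    Real.norm_eq_abs, sq_abs]

lemma aestronglyMeasurable_weight_mul_norm_sq (s : ℝ) (hF : AEStronglyMeasurable F) :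
    AEStronglyMeasurable fun k ↦ (1 + k ^ 2) ^ s * ‖F k‖ ^ 2 :=
  have hweight : Measurable fun k : ℝ ↦ (1 + k ^ 2) ^ s := by fun_prop
  hweight.aestronglyMeasurable.mul (hF.norm.pow 2)

lemma memHsFT_iff : MemHsFT s F ↔ AEStronglyMeasurable F ∧ hsENorm s (‖F ·‖ₑ) volume < ∞ := by
  refine and_congr_right fun hF ↦ ?_
  rw [← lintegral_ofReal_ne_top_iff_integrable
    (aestronglyMeasurable_weight_mul_norm_sq s hF) (.of_forall fun k ↦ by positivity),
    ← hsENorm_enorm_sq, lt_top_iff_ne_top]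
  simp

lemma sqrt_hsNormSq (hF : AEStronglyMeasurable F) :
    √(hsNormSq s F) = (√(2 * Real.pi))⁻¹ * (hsENorm s (‖F ·‖ₑ) volume).toReal := by
  rw [hsNormSq, integral_eq_lintegral_of_nonneg_ae (.of_forall fun k ↦ by positivity)
    (aestronglyMeasurable_weight_mul_norm_sq s hF), ← hsENorm_enorm_sq,
    Real.sqrt_mul (by positivity), Real.sqrt_inv, ENNReal.toReal_pow,
    Real.sqrt_sq ENNReal.toReal_nonneg]

theorem stmt6_general (α s : ℝ) (hα : 0 ≤ α) (hαs : α ≤ 2 * s) (hs : 1 / 2 < s) :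
    ∃ C : ℝ, ∀ F G : ℝ → ℂ, MemHsFT s F → MemHsFT s G →
      MemHsFT (s - α) (hirotaSymbolFT α F G) ∧
      Real.sqrt (hsNormSq (s - α) (hirotaSymbolFT α F G)) ≤
        C * Real.sqrt (hsNormSq s F) * Real.sqrt (hsNormSq s G) := by
  set K : ℝ≥0∞ := 6 * (2 ^ s : ℝ≥0) * hsENorm (-s) 1 (volume : Measure ℝ)
  have hK : K < ∞ := ENNReal.mul_lt_top (by finiteness)
    (hsENorm_one_lt_top volume (by rw [Module.finrank_self]; push_cast; linarith))
  refine ⟨√(2 * Real.pi) * K.toReal, fun F G hF hG ↦ ?_⟩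
  obtain ⟨hF_meas, hF_top⟩ := memHsFT_iff.1 hF
  obtain ⟨hG_meas, hG_top⟩ := memHsFT_iff.1 hG
  have hH_meas := aestronglyMeasurable_hirotaSymbolFT (α := α) hF_meas hG_meas
  have hbound := hsENorm_hirotaSymbolFT_le hα hαs hF_meas hG_meas
  have htop := ENNReal.mul_lt_top (ENNReal.mul_lt_top hK hF_top) hG_top
  refine ⟨memHsFT_iff.2 ⟨hH_meas, hbound.trans_lt htop⟩, ?_⟩
  rw [sqrt_hsNormSq hH_meas, sqrt_hsNormSq hF_meas, sqrt_hsNormSq hG_meas]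
  calc _ ≤ (√(2 * Real.pi))⁻¹ * (K * hsENorm s (‖F ·‖ₑ) volume *
        hsENorm s (‖G ·‖ₑ) volume).toReal := by
        gcongr
        exact htop.ne
    _ = _ := by
        rw [ENNReal.toReal_mul, ENNReal.toReal_mul]
        field_simp

end Hirota

/-- for `0 < α ≤ 1` and `s > 1/2` there is a constant `C = C(s,α)` such that
for all `f, g ∈ H^s(ℝ)`, the function `D^α f·g` belongs to `H^{s−α}(ℝ)` and
`‖D^α f·g‖_{H^{s−α}} ≤ C ‖f‖_{H^s} ‖g‖_{H^s}`. -/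
theorem stmt6 (α s : ℝ) (hα0 : 0 < α) (hα1 : α ≤ 1) (hs : 1 / 2 < s) :
    ∃ C : ℝ, ∀ F G : ℝ → ℂ, MemHsFT s F → MemHsFT s G →
      MemHsFT (s - α) (hirotaSymbolFT α F G) ∧
      Real.sqrt (hsNormSq (s - α) (hirotaSymbolFT α F G)) ≤
        C * Real.sqrt (hsNormSq s F) * Real.sqrt (hsNormSq s G) :=
  stmt6_general α s hα0.le (by linarith) hs
end
end

section
/- Let 0<α<1 and k∈ℝ. Then the absolutely convergent integral ∫₀^∞ (1 − e^{−iky}) y^{−1−α} dy equals −Γ(−α) (ik)^α, where (ik)^α is the principal-branch power (the limit of (ε+ik)^α as ε→0⁺). -/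
open MeasureTheory

noncomputable section

/-!
Set `F z = ∫₀^∞ (1 - e^{-zt}) t^{s-1} dt`, the Mellin transform of `1 - e^{-zt}` at `s`, for
`-1 < re s < 0` and `0 ≤ re z`; the theorem is the case `s = -α`, `z = ik`.

If `0 < re z`, integration by parts turns `F z` into `-(z/s) ∫₀^∞ e^{-zt} t^s dt`, which is Euler's
integral with complex scale `z`: it equals `z^{-s-1} Γ(s+1)` for `z > 0` by substitution, hence on
the whole half-plane by the identity theorem. Therefore `F z = -Γ(s) z^{-s}` there. Both sides are
continuous on the closed half-plane, the left one by dominated convergence because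
`|1 - e^{-zt}| ≤ min (2|z|t) 2`, so the formula persists on the imaginary axis.
-/

section RightHalfPlane

open Set Filter Topology

variable {E : Type*} [NormedAddCommGroup E]

theorem integral_Ioi_of_hasDerivAt_of_tendsto_nhdsGT [NormedSpace ℝ E] [CompleteSpace E]
    {f f' : ℝ → E} {a : ℝ} {m n : E} (hderiv : ∀ x ∈ Ioi a, HasDerivAt f (f' x) x)
    (hf' : IntegrableOn f' (Ioi a)) (hbot : Tendsto f (𝓝[>] a) (𝓝 m))
    (htop : Tendsto f atTop (𝓝 n)) : ∫ x in Ioi a, f' x = n - m := by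
  have hupdate : ∀ x ∈ Ioi a, Function.update f a m =ᶠ[𝓝 x] f := fun x (hx : a < x) => by
    filter_upwards [eventually_ne_nhds hx.ne'] with y hy using Function.update_of_ne hy m f
  have hcont : ContinuousWithinAt (Function.update f a m) (Ici a) a := by
    rwa [continuousWithinAt_update_same, Ici_sdiff_left]
  have htop' : Tendsto (Function.update f a m) atTop (𝓝 n) := by
    refine htop.congr' ?_
    filter_upwards [eventually_ne_atTop a] with x hx using (Function.update_of_ne hx m f).symm
  simpa using integral_Ioi_of_hasDerivAt_of_tendsto hcont
    (fun x hx => (hderiv x hx).congr_of_eventuallyEq (hupdate x hx)) hf' htop'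

section IntegrationByParts

variable [NormedSpace ℂ E] {f f' : ℝ → E} {s : ℂ} {a b : ℝ}

theorem isBigO_cpow_smul {l : Filter ℝ} (hl : ∀ᶠ t in l, 0 < t) (hf : f =O[l] (· ^ (-a))) :
    (fun t : ℝ => (t : ℂ) ^ s • f t) =O[l] (· ^ (s.re - a)) := by
  have hpow : (fun t : ℝ => (t : ℂ) ^ s) =O[l] (· ^ s.re) := by
    refine Asymptotics.IsBigO.of_norm_eventuallyLE ?_
    filter_upwards [hl] with t ht using (Complex.norm_cpow_eq_rpow_re_of_pos ht s).le
  refine (hpow.smul hf).congr' .rfl ?_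
  filter_upwards [hl] with t ht
  rw [smul_eq_mul, ← Real.rpow_add ht, sub_eq_add_neg]

theorem tendsto_cpow_smul_atTop_zero (hf : f =O[atTop] (· ^ (-a))) (hs : s.re < a) :
    Tendsto (fun t : ℝ => (t : ℂ) ^ s • f t) atTop (𝓝 0) := by
  refine (isBigO_cpow_smul (eventually_gt_atTop 0) hf).trans_tendsto ?_
  simpa only [neg_sub] using tendsto_rpow_neg_atTop (sub_pos.2 hs)

theorem tendsto_cpow_smul_nhdsGT_zero (hf : f =O[𝓝[>] 0] (· ^ (-b))) (hs : b < s.re) :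
    Tendsto (fun t : ℝ => (t : ℂ) ^ s • f t) (𝓝[>] 0) (𝓝 0) := by
  refine (isBigO_cpow_smul self_mem_nhdsWithin hf).trans_tendsto ?_
  have hpos : 0 < s.re - b := sub_pos.2 hs
  simpa only [Real.zero_rpow hpos.ne'] using
    (Real.continuousAt_rpow_const 0 (s.re - b) (Or.inr hpos.le)).tendsto.mono_left
      nhdsWithin_le_nhds

theorem mellin_add_one_of_hasDerivAt [CompleteSpace E] (hs : s ≠ 0)
    (hderiv : ∀ t ∈ Ioi (0 : ℝ), HasDerivAt f (f' t) t) (hf' : MellinConvergent f' (s + 1))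
    (hf_top : f =O[atTop] (· ^ (-a))) (hs_top : s.re < a)
    (hf_bot : f =O[𝓝[>] 0] (· ^ (-b))) (hs_bot : b < s.re) :
    mellin f' (s + 1) = -(s • mellin f s) := by
  have hf : MellinConvergent f s := by
    refine mellinConvergent_of_isBigO_rpow ?_ hf_top hs_top hf_bot hs_bot
    exact ContinuousOn.locallyIntegrableOn
      (fun t ht => (hderiv t ht).continuousAt.continuousWithinAt) measurableSet_Ioi
  have hprod : ∀ t ∈ Ioi (0 : ℝ), HasDerivAt (fun t : ℝ => (t : ℂ) ^ s • f t)
      ((t : ℂ) ^ (s + 1 - 1) • f' t + s • (t : ℂ) ^ (s - 1) • f t) t := fun t ht => by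
    simp only [add_sub_cancel_right, ← mul_smul]
    exact (hasDerivAt_ofReal_cpow_const (ne_of_gt ht) hs).smul (hderiv t ht)
  have hparts : ∫ t in Ioi (0 : ℝ),
      ((t : ℂ) ^ (s + 1 - 1) • f' t + s • (t : ℂ) ^ (s - 1) • f t) = 0 - 0 :=
    integral_Ioi_of_hasDerivAt_of_tendsto_nhdsGT hprod (hf'.add (hf.smul s))
      (tendsto_cpow_smul_nhdsGT_zero hf_bot hs_bot) (tendsto_cpow_smul_atTop_zero hf_top hs_top)
  have hadd := integral_add hf' (hf.smul s)
  simp only [Pi.smul_apply] at hadd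
  rw [sub_zero, hadd, integral_smul] at hparts
  exact eq_neg_of_add_eq_zero_left hparts

end IntegrationByParts

theorem eqOn_of_eventually_eq_ofReal [NormedSpace ℂ E] [CompleteSpace E] {f g : ℂ → E} {U : Set ℂ}
    (hf : DifferentiableOn ℂ f U) (hg : DifferentiableOn ℂ g U) (hUo : IsOpen U)
    (hUc : IsPreconnected U) {x₀ : ℝ} (hx₀ : (x₀ : ℂ) ∈ U) (h : ∀ᶠ x : ℝ in 𝓝 x₀, f x = g x) :
    EqOn f g U := by
  refine (hf.analyticOnNhd hUo).eqOn_of_preconnected_of_frequently_eq (hg.analyticOnNhd hUo)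
    hUc hx₀ ?_
  have hofReal : Tendsto ((↑) : ℝ → ℂ) (𝓝[≠] x₀) (𝓝[≠] (x₀ : ℂ)) :=
    Complex.continuous_ofReal.continuousAt.tendsto.inf
      (tendsto_principal_principal.2 fun _ => Complex.ofReal_injective.ne)
  exact hofReal.frequently (h.filter_mono nhdsWithin_le_nhds).frequently

section ExpNegMul

variable {s z : ℂ}

theorem hasDerivAt_exp_neg_mul_ofReal (z : ℂ) (t : ℝ) :
    HasDerivAt (fun t : ℝ => Complex.exp (-(z * t))) (-z * Complex.exp (-(z * t))) t := by
  simpa [mul_comm] using ((hasDerivAt_id t).ofReal_comp.const_mul z).neg.cexp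

theorem mellinConvergent_exp_neg_mul (hs : 0 < s.re) (hz : 0 < z.re) :
    MellinConvergent (fun t : ℝ => Complex.exp (-(z * t))) s := by
  have hcont : Continuous fun t : ℝ => Complex.exp (-(z * t)) := by fun_prop
  refine mellinConvergent_of_isBigO_rpow_exp (b := 0) hz
    (hcont.locallyIntegrable.locallyIntegrableOn _) ?_ ?_ hs
  · refine Asymptotics.IsBigO.of_norm_le fun t => ?_
    simp [Complex.norm_exp]
  · simpa using (hcont.tendsto 0).isBigO_one ℝ |>.mono nhdsWithin_le_nhds

theorem hasDerivAt_mellin_exp_neg_mul (hs : 0 < s.re) (hz : 0 < z.re) :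
    HasDerivAt (fun z => mellin (fun t : ℝ => Complex.exp (-(z * t))) s)
      (-mellin (fun t : ℝ => Complex.exp (-(z * t))) (s + 1)) z := by
  obtain ⟨r, hr, hrz⟩ := exists_between hz
  have hs1 : 0 < (s + 1).re := by simpa using hs.trans (lt_add_one _)
  have hdom : IntegrableOn
      (fun t : ℝ => ‖(t : ℂ) ^ (s + 1 - 1) • Complex.exp (-(r * t))‖) (Ioi 0) :=
    (mellinConvergent_exp_neg_mul hs1 (by simpa using hr)).norm
  have hz_nhds : {w : ℂ | 0 < w.re} ∈ 𝓝 z :=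
    (isOpen_lt continuous_const Complex.continuous_re).mem_nhds hz
  have hr_nhds : {w : ℂ | r < w.re} ∈ 𝓝 z :=
    (isOpen_lt continuous_const Complex.continuous_re).mem_nhds hrz
  rw [mellin, ← integral_neg]
  refine (hasDerivAt_integral_of_dominated_loc_of_deriv_le
    (F := fun w (t : ℝ) => (t : ℂ) ^ (s - 1) • Complex.exp (-(w * t)))
    (F' := fun w (t : ℝ) => -((t : ℂ) ^ (s + 1 - 1) • Complex.exp (-(w * t)))) hr_nhds
    ?_ (mellinConvergent_exp_neg_mul hs hz)
    (mellinConvergent_exp_neg_mul hs1 hz).neg.aestronglyMeasurable ?_ hdom ?_).2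
  · filter_upwards [hz_nhds] with w hw
    exact (mellinConvergent_exp_neg_mul hs hw).aestronglyMeasurable
  · filter_upwards [ae_restrict_mem measurableSet_Ioi] with t (ht : 0 < t) w (hw : r < w.re)
    rw [norm_neg, norm_smul, norm_smul]
    gcongr
    simpa [Complex.norm_exp] using mul_le_mul_of_nonneg_right hw.le ht.le
  · filter_upwards [ae_restrict_mem measurableSet_Ioi] with t (ht : 0 < t) w _
    have hpow : (t : ℂ) ^ (s + 1 - 1) = (t : ℂ) ^ (s - 1) * t := by
      rw [add_sub_right_comm, Complex.cpow_add _ _ (Complex.ofReal_ne_zero.2 ht.ne'),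
        Complex.cpow_one]
    refine ((hasDerivAt_mul_const (t : ℂ)).neg.cexp.const_smul ((t : ℂ) ^ (s - 1))).congr_deriv ?_
    simp only [hpow, smul_eq_mul, Pi.neg_apply]
    ring

theorem mellin_exp_neg_mul (hs : 0 < s.re) (hz : 0 < z.re) :
    mellin (fun t : ℝ => Complex.exp (-(z * t))) s = Complex.Gamma s * z ^ (-s) := by
  have hopen : IsOpen {z : ℂ | 0 < z.re} := isOpen_lt continuous_const Complex.continuous_re
  have hright : DifferentiableOn ℂ (fun z : ℂ => Complex.Gamma s * z ^ (-s)) {z | 0 < z.re} :=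
    fun w hw => ((differentiableAt_id.cpow_const (Or.inl hw)).const_mul _).differentiableWithinAt
  have hleft : DifferentiableOn ℂ
      (fun z => mellin (fun t : ℝ => Complex.exp (-(z * t))) s) {z | 0 < z.re} :=
    fun w hw => (hasDerivAt_mellin_exp_neg_mul hs hw).differentiableAt.differentiableWithinAt
  suffices hreal : ∀ᶠ r : ℝ in 𝓝 1,
      mellin (fun t : ℝ => Complex.exp (-(r * t))) s = Complex.Gamma s * (r : ℂ) ^ (-s) from
    eqOn_of_eventually_eq_ofReal hleft hright hopen (convex_halfSpace_re_gt 0).isPreconnected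
      (by simp) hreal hz
  filter_upwards [lt_mem_nhds one_pos] with r hr
  calc mellin (fun t : ℝ => Complex.exp (-(r * t))) s
      = (1 / r) ^ s * Complex.Gamma s := Complex.integral_cpow_mul_exp_neg_mul_Ioi hs hr
    _ = Complex.Gamma s * r ^ (-s) := by
      rw [one_div, Complex.inv_cpow_ofReal_nonneg hr.le, Complex.cpow_neg, mul_comm]

end ExpNegMul

section OneSubExpNegMul

variable {s z : ℂ}

theorem norm_one_sub_exp_neg_le_min {w : ℂ} (hw : 0 ≤ w.re) :
    ‖1 - Complex.exp (-w)‖ ≤ min (2 * ‖w‖) 2 := by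
  have hexp : ‖Complex.exp (-w)‖ ≤ 1 := by simpa [Complex.norm_exp] using hw
  have htwo : ‖1 - Complex.exp (-w)‖ ≤ 2 := by
    linarith [norm_sub_le 1 (Complex.exp (-w)), norm_one (α := ℂ)]
  refine le_min ?_ htwo
  rcases le_total ‖w‖ 1 with h | h
  · simpa [norm_sub_rev] using Complex.norm_exp_sub_one_le (x := -w) (by simpa using h)
  · linarith

theorem norm_one_sub_exp_neg_mul_le_min {C t : ℝ} (hz : 0 ≤ z.re) (hC : 2 * ‖z‖ ≤ C)
    (ht : 0 ≤ t) : ‖1 - Complex.exp (-(z * t))‖ ≤ min (C * t) 2 := by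
  have hre : 0 ≤ (z * t).re := by simpa using mul_nonneg hz ht
  refine (norm_one_sub_exp_neg_le_min hre).trans (min_le_min_right 2 ?_)
  rw [norm_mul, Complex.norm_of_nonneg ht, ← mul_assoc]
  gcongr

variable {C : ℝ}

theorem isBigO_min_mul_two_atTop (hC : 0 ≤ C) :
    (fun t : ℝ => min (C * t) 2) =O[atTop] (fun t : ℝ => t ^ (-(0 : ℝ))) := by
  refine .of_bound 2 ?_
  filter_upwards [eventually_ge_atTop 0] with t ht
  have h : 0 ≤ min (C * t) 2 := by positivity
  simp [abs_of_nonneg h]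

theorem isBigO_min_mul_two_nhdsGT_zero (hC : 0 ≤ C) :
    (fun t : ℝ => min (C * t) 2) =O[𝓝[>] 0] (fun t : ℝ => t ^ (-(-1 : ℝ))) := by
  refine .of_bound C ?_
  filter_upwards [self_mem_nhdsWithin] with t (ht : 0 < t)
  have h : 0 ≤ min (C * t) 2 := by positivity
  simp [abs_of_nonneg h, abs_of_pos ht]

theorem integrableOn_rpow_mul_min {σ : ℝ} (hσ : -1 < σ) (hσ' : σ < 0) (hC : 0 ≤ C) :
    IntegrableOn (fun t : ℝ => t ^ (σ - 1) * min (C * t) 2) (Ioi 0) := by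
  have hcont : Continuous fun t : ℝ => min (C * t) 2 := by fun_prop
  exact mellin_convergent_of_isBigO_scalar (hcont.locallyIntegrable.locallyIntegrableOn _)
    (isBigO_min_mul_two_atTop hC) hσ' (isBigO_min_mul_two_nhdsGT_zero hC) hσ

theorem one_sub_exp_neg_mul_isBigO_min {l : Filter ℝ} (hl : ∀ᶠ t in l, 0 ≤ t) (hz : 0 ≤ z.re) :
    (fun t : ℝ => 1 - Complex.exp (-(z * t))) =O[l] (fun t : ℝ => min (2 * ‖z‖ * t) 2) := by
  refine Asymptotics.IsBigO.of_norm_eventuallyLE ?_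
  filter_upwards [hl] with t ht using norm_one_sub_exp_neg_mul_le_min hz le_rfl ht

theorem one_sub_exp_neg_mul_isBigO_atTop (hz : 0 ≤ z.re) :
    (fun t : ℝ => 1 - Complex.exp (-(z * t))) =O[atTop] (fun t : ℝ => t ^ (-(0 : ℝ))) :=
  (one_sub_exp_neg_mul_isBigO_min (eventually_ge_atTop 0) hz).trans
    (isBigO_min_mul_two_atTop (by positivity))

theorem one_sub_exp_neg_mul_isBigO_nhdsGT_zero (hz : 0 ≤ z.re) :
    (fun t : ℝ => 1 - Complex.exp (-(z * t))) =O[𝓝[>] 0] (fun t : ℝ => t ^ (-(-1 : ℝ))) :=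
  (one_sub_exp_neg_mul_isBigO_min (eventually_mem_nhdsWithin.mono fun _ => le_of_lt) hz).trans
    (isBigO_min_mul_two_nhdsGT_zero (by positivity))

theorem mellinConvergent_one_sub_exp_neg_mul (hs : -1 < s.re) (hs' : s.re < 0) (hz : 0 ≤ z.re) :
    MellinConvergent (fun t : ℝ => 1 - Complex.exp (-(z * t))) s := by
  have hcont : Continuous fun t : ℝ => 1 - Complex.exp (-(z * t)) := by fun_prop
  exact mellinConvergent_of_isBigO_rpow (hcont.locallyIntegrable.locallyIntegrableOn _)
    (one_sub_exp_neg_mul_isBigO_atTop hz) hs' (one_sub_exp_neg_mul_isBigO_nhdsGT_zero hz) hs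

theorem mellin_one_sub_exp_neg_mul_of_re_pos (hs : -1 < s.re) (hs' : s.re < 0) (hz : 0 < z.re) :
    mellin (fun t : ℝ => 1 - Complex.exp (-(z * t))) s = -Complex.Gamma s * z ^ (-s) := by
  have hs0 : s ≠ 0 := by rintro rfl; simp at hs'
  have hz0 : z ≠ 0 := by rintro rfl; simp at hz
  have hs1 : 0 < (s + 1).re := by simpa using neg_lt_iff_pos_add.1 hs
  have hderiv : ∀ t ∈ Ioi (0 : ℝ), HasDerivAt (fun t : ℝ => 1 - Complex.exp (-(z * t)))
      (z • Complex.exp (-(z * t))) t := fun t _ => by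
    simpa using (hasDerivAt_exp_neg_mul_ofReal z t).const_sub 1
  have hparts := mellin_add_one_of_hasDerivAt hs0 hderiv
    ((mellinConvergent_exp_neg_mul hs1 hz).const_smul z)
    (one_sub_exp_neg_mul_isBigO_atTop hz.le) hs'
    (one_sub_exp_neg_mul_isBigO_nhdsGT_zero hz.le) hs
  have hpow : z * z ^ (-(s + 1)) = z ^ (-s) := by
    rw [neg_add', Complex.cpow_sub _ _ hz0, Complex.cpow_one, mul_div_cancel₀ _ hz0]
  apply mul_left_cancel₀ hs0
  calc s * mellin (fun t : ℝ => 1 - Complex.exp (-(z * t))) s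
      = -(z * (Complex.Gamma (s + 1) * z ^ (-(s + 1)))) := by
        rw [← mellin_exp_neg_mul hs1 hz, ← smul_eq_mul z, ← mellin_const_smul, hparts, neg_neg,
          smul_eq_mul]
    _ = -(s * Complex.Gamma s * (z * z ^ (-(s + 1)))) := by
        rw [Complex.Gamma_add_one s hs0, mul_left_comm]
    _ = s * (-Complex.Gamma s * z ^ (-s)) := by rw [hpow]; ring

theorem continuousOn_mellin_one_sub_exp_neg_mul (hs : -1 < s.re) (hs' : s.re < 0) :
    ContinuousOn (fun z => mellin (fun t : ℝ => 1 - Complex.exp (-(z * t))) s)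
      {z | 0 ≤ z.re} := by
  intro z _
  refine continuousWithinAt_of_dominated
    (bound := fun t => t ^ (s.re - 1) * min (2 * (‖z‖ + 1) * t) 2) ?_ ?_
    (integrableOn_rpow_mul_min hs hs' (by positivity)) ?_
  · filter_upwards [self_mem_nhdsWithin] with w hw
    exact (mellinConvergent_one_sub_exp_neg_mul hs hs' hw).aestronglyMeasurable
  · have hnear : ∀ᶠ w in 𝓝 z, ‖w‖ < ‖z‖ + 1 :=
      continuous_norm.continuousAt.eventually_lt_const (lt_add_one ‖z‖)
    filter_upwards [self_mem_nhdsWithin, hnear.filter_mono nhdsWithin_le_nhds] with w hw hwz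
    filter_upwards [ae_restrict_mem measurableSet_Ioi] with t (ht : 0 < t)
    rw [norm_smul, Complex.norm_cpow_eq_rpow_re_of_pos ht, Complex.sub_re, Complex.one_re]
    gcongr
    exact norm_one_sub_exp_neg_mul_le_min hw (by gcongr) ht.le
  · exact .of_forall fun t => Continuous.continuousWithinAt (by fun_prop)

end OneSubExpNegMul

theorem hasMellin_neg_ofReal_iff {f : ℝ → ℂ} {α : ℝ} {m : ℂ} :
    HasMellin f (-α) m ↔ IntegrableOn (fun y => f y / ((y ^ (1 + α) : ℝ) : ℂ)) (Ioi 0) ∧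
      ∫ y in Ioi (0 : ℝ), f y / ((y ^ (1 + α) : ℝ) : ℂ) = m := by
  have hkernel : EqOn (fun y : ℝ => (y : ℂ) ^ (-(α : ℂ) - 1) • f y)
      (fun y => f y / ((y ^ (1 + α) : ℝ) : ℂ)) (Ioi 0) := fun y (hy : 0 < y) => by
    have hpow : (y : ℂ) ^ (-(α : ℂ) - 1) = (((y ^ (1 + α) : ℝ) : ℂ))⁻¹ := by
      rw [Complex.ofReal_cpow hy.le, ← Complex.cpow_neg]
      push_cast
      ring_nf
    simp only [hpow, smul_eq_mul, div_eq_inv_mul]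
  rw [HasMellin, MellinConvergent, mellin, integrableOn_congr_fun hkernel measurableSet_Ioi,
    setIntegral_congr_fun measurableSet_Ioi hkernel]

theorem stmt9_general {s z : ℂ} (hs : -1 < s.re) (hs' : s.re < 0) (hz : 0 ≤ z.re) :
    HasMellin (fun t : ℝ => 1 - Complex.exp (-(z * t))) s (-Complex.Gamma s * z ^ (-s)) := by
  refine ⟨mellinConvergent_one_sub_exp_neg_mul hs hs' hz, ?_⟩
  have hopen : EqOn (fun z => mellin (fun t : ℝ => 1 - Complex.exp (-(z * t))) s)
      (fun z => -Complex.Gamma s * z ^ (-s)) {z | 0 < z.re} :=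
    fun z hz => mellin_one_sub_exp_neg_mul_of_re_pos hs hs' hz
  have hpow : ContinuousOn (fun z => -Complex.Gamma s * z ^ (-s)) {z : ℂ | 0 ≤ z.re} :=
    fun z hz => (Complex.continuousAt_cpow_const_of_re_pos (Or.inl hz)
      (by simpa using hs')).continuousWithinAt.const_mul _
  exact hopen.of_subset_closure (continuousOn_mellin_one_sub_exp_neg_mul hs hs') hpow
    (fun z (hz : 0 < z.re) => hz.le) (Complex.closure_setOfPred_lt_re 0).ge hz

end RightHalfPlane

/-- for `0 < α < 1` and `k ∈ ℝ`, the integral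
`∫₀^∞ (1 − e^{−iky}) y^{−1−α} dy` is absolutely convergent and equals `−Γ(−α)(ik)^α`,
with the principal-branch power `(ik)^α` (the boundary value of `(ε+ik)^α` as `ε → 0⁺`,
which is Mathlib's principal `cpow`). -/
theorem stmt9 (α : ℝ) (hα0 : 0 < α) (hα1 : α < 1) (k : ℝ) :
    IntegrableOn
      (fun y : ℝ => (1 - Complex.exp (-(Complex.I * (k : ℂ) * (y : ℂ)))) / ((y ^ (1 + α) : ℝ) : ℂ))
      (Set.Ioi 0) volume ∧
    ∫ y in Set.Ioi (0 : ℝ),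
        (1 - Complex.exp (-(Complex.I * (k : ℂ) * (y : ℂ)))) / ((y ^ (1 + α) : ℝ) : ℂ)
      = -((Real.Gamma (-α) : ℂ)) * (Complex.I * (k : ℂ)) ^ (α : ℂ) := by
  rw [← Complex.Gamma_ofReal, Complex.ofReal_neg, ← hasMellin_neg_ofReal_iff]
  simpa using stmt9_general (s := -α) (z := Complex.I * k) (by simpa) (by simpa) (by simp)
end
end
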